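/- arXiv:1907.09405 — 3 statements merged into one kernel-verified Lean document; each statement's English description precedes it below -/
import Mathlib

section
/- With high probability, every vector (m_1,…,m_q) of nonnegative integers satisfying m_1+⋯+m_q = n and m_i ≥ βn for all i ∈ [q] lies in the perfect matching color profile of G; that is, w.h.p. for every such (m_1,…,m_q) there exists a perfect matching M of G with |M ∩ Q_i| = m_i for every i = 1,…,q. -/
open MeasureTheory Filter Finset Asymptotics

/-- Discrete measurable structure on edge states: `none` = non-edge, `some i` = edge of color `cᵢ`. -/
instance (q : ℕ) : MeasurableSpace (Option (Fin q)) := ⊤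

/-- Distribution of the state of a single pair: non-edge with probability `1-p`,
an edge of color `cᵢ` with probability `αᵢ·p`. -/
noncomputable def colorM (q : ℕ) (α : Fin q → ℝ) (p : ℝ) : Measure (Option (Fin q)) :=
  ENNReal.ofReal (1 - p) • Measure.dirac none +
    ∑ i : Fin q, ENNReal.ofReal (α i * p) • Measure.dirac (some i)

/-- The randomly colored random bipartite graph on parts `A = B = Fin n`:
independently, each pair `(a,b)` is a non-edge with probability `1-p` and an
edge of color `cᵢ` with probability `αᵢ·p`.  A sample is a function
`f : Fin n × Fin n → Option (Fin q)`. -/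
noncomputable def graphM (n q : ℕ) (α : Fin q → ℝ) (p : ℝ) :
    Measure (Fin n × Fin n → Option (Fin q)) :=
  Measure.pi fun _ => colorM q α p

lemma exists_fn_fibers {U ι : Type*} [Fintype U] [Fintype ι] [DecidableEq ι] (m : ι → ℕ)
    (h : ∑ i, m i = Fintype.card U) : ∃ c : U → ι, ∀ i, (univ.filter fun u => c u = i).card = m i := by
  classical
  have e : U ≃ (Σ i, Fin (m i)) := Fintype.equivOfCardEq (by simp [h])
  refine ⟨fun u => (e u).1, fun i => ?_⟩
  rw [← Fintype.card_subtype]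
  have e2 : {u // (e u).1 = i} ≃ Fin (m i) :=
    (e.subtypeEquiv (q := fun x => x.1 = i) (fun a => Iff.rfl)).trans (Equiv.sigmaSubtype i)
  simpa using Fintype.card_congr e2

lemma exists_assign {U : Type*} [Fintype U] {q : ℕ} (g : U → Option (Fin q)) (m : Fin q → ℕ)
    (hg : ∀ i, (univ.filter fun u => g u = some i).card ≤ m i) (h : ∑ i, m i = Fintype.card U) :
    ∃ c : U → Fin q, (∀ i u, g u = some i → c u = i) ∧
      ∀ i, (univ.filter fun u => c u = i).card = m i := by
  classical
  obtain ⟨r, hr⟩ := exists_fn_fibers (U := {u // g u = none})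
    (fun i => m i - (univ.filter fun u => g u = some i).card) (by
      rw [Fintype.card_subtype]
      have h1 : (univ : Finset U).card = ∑ o : Option (Fin q), (univ.filter fun u => g u = o).card :=
        Finset.card_eq_sum_card_fiberwise (fun _ _ => by simp)
      rw [Fintype.sum_option, Finset.card_univ] at h1
      have h2 : ∑ i, (m i - (univ.filter fun u => g u = some i).card) +
          ∑ i, (univ.filter fun u => g u = some i).card = ∑ i, m i := by
        rw [← Finset.sum_add_distrib]
        exact Finset.sum_congr rfl fun i _ => Nat.sub_add_cancel (hg i)
      omega)
  refine ⟨fun u => if hu : g u = none then r ⟨u, hu⟩ else (g u).get (Option.isSome_iff_ne_none.2 hu),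
    fun i u hu => by simp [hu], fun i => ?_⟩
  have h3 : (univ.filter fun u => (if hu : g u = none then r ⟨u, hu⟩ else
      (g u).get (Option.isSome_iff_ne_none.2 hu)) = i) =
      (univ.filter fun u => g u = some i) ∪
        ((univ.filter fun u : {u // g u = none} => r u = i).map (Function.Embedding.subtype _)) := by
    ext u
    rcases hgu : g u with _ | j
    · simp [hgu]
    · simp [hgu]
  rw [h3, card_union_of_disjoint, card_map, hr i]
  · have := hg i; omega
  · rw [Finset.disjoint_left]
    intro u hu hu'
    simp only [Finset.mem_map, mem_filter, mem_univ, true_and, Function.Embedding.coe_subtype] at hu hu'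
    obtain ⟨x, _, rfl⟩ := hu'
    rw [x.2] at hu; cases hu

lemma hall_pm {U V : Type*} [Fintype U] [Fintype V] (r : U → V → Prop)
    (hc : Fintype.card U = Fintype.card V) (K : ℝ)
    (h1 : ∀ S T : Finset _, (S.card : ℝ) ≤ K → (∀ u ∈ S, ∀ v, r u v → v ∈ T) → S.card ≤ T.card)
    (h2 : ∀ S T : Finset _, (T.card : ℝ) ≤ K → (∀ v ∈ T, ∀ u, r u v → u ∈ S) → T.card ≤ S.card)
    (h3 : ∀ S T : Finset _, K < S.card → K < T.card → ∃ u ∈ S, ∃ v ∈ T, r u v) :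
    ∃ e : U ≃ V, ∀ u, r u (e u) := by
  classical
  have key : ∀ S : Finset U, S.card ≤ (univ.filter fun v => ∃ u ∈ S, r u v).card := by
    intro S
    set N := univ.filter fun v => ∃ u ∈ S, r u v with hN
    by_cases hS : (S.card : ℝ) ≤ K
    · exact h1 S N hS fun u hu v hr => by simp only [hN, mem_filter, mem_univ, true_and]; exact ⟨u, hu, hr⟩
    by_cases hT : ((Nᶜ).card : ℝ) ≤ K
    · have := h2 Sᶜ Nᶜ hT (fun v hv u hr => by
        rw [mem_compl] at hv ⊢
        intro hu
        exact hv (by simp only [hN, mem_filter, mem_univ, true_and]; exact ⟨u, hu, hr⟩))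
      rw [card_compl, card_compl] at this
      have := card_le_univ S
      have := card_le_univ N
      omega
    · push Not at hS hT
      obtain ⟨u, hu, v, hv, hr⟩ := h3 S Nᶜ hS hT
      exact absurd (by simp only [hN, mem_filter, mem_univ, true_and]; exact ⟨u, hu, hr⟩) (mem_compl.1 hv)
  obtain ⟨g, hg, hr⟩ := (Fintype.all_card_le_filter_rel_iff_exists_injective r).1 key
  have hb : Function.Bijective g := (Fintype.bijective_iff_injective_and_card g).2 ⟨hg, hc⟩
  exact ⟨Equiv.ofBijective g hb, hr⟩

lemma min_violator {U V : Type*} [Fintype U] [Fintype V] [DecidableEq U] [DecidableEq V]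
    (r : U → V → Prop) [DecidableRel r] (S : Finset U) :
    ∀ T : Finset V, (∀ u ∈ S, ∀ v, r u v → v ∈ T) → T.card < S.card →
    ∃ S' T', S' ⊆ S ∧ T'.card + 1 = S'.card ∧ (∀ u ∈ S', ∀ v, v ∉ T' → ¬ r u v) ∧
      2 * T'.card ≤ ((S' ×ˢ T').filter fun e => r e.1 e.2).card := by
  induction S using Finset.strongInduction with
  | H S ih =>
    intro T hT hlt
    by_cases hsub : ∃ x ∈ S, ∃ T0 : Finset V, (∀ u ∈ S.erase x, ∀ v, r u v → v ∈ T0) ∧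
        T0.card < (S.erase x).card
    · obtain ⟨x, hx, T0, h1, h2⟩ := hsub
      obtain ⟨S', T', h3, h4⟩ := ih _ (erase_ssubset hx) T0 h1 h2
      exact ⟨S', T', h3.trans (erase_subset _ _), h4⟩
    · push Not at hsub
      obtain ⟨x0, hx0⟩ : S.Nonempty := card_pos.1 (by omega)
      have hTc : T.card + 1 = S.card := by
        have := hsub x0 hx0 T (fun u hu => hT u (mem_of_mem_erase hu))
        rw [card_erase_of_mem hx0] at this
        omega
      refine ⟨S, T, Subset.rfl, hTc, fun u hu v hv hr => hv (hT u hu v hr), ?_⟩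
      have h2 : ∀ v ∈ T, 2 ≤ (S.filter fun u => r u v).card := by
        intro v hv
        by_contra hcon
        have hle : (S.filter fun u => r u v).card ≤ 1 := by omega
        have : ∃ x ∈ S, ∀ u ∈ S, r u v → u = x := by
          by_cases hne : ∃ x ∈ S, r x v
          · obtain ⟨x, hx, hr⟩ := hne
            refine ⟨x, hx, fun u hu hur => ?_⟩
            exact Finset.card_le_one.1 hle u (by simp [hu, hur]) x (by simp [hx, hr])
          · push Not at hne
            exact ⟨x0, hx0, fun u hu hur => absurd hur (hne u hu)⟩
        obtain ⟨x, hx, hxu⟩ := this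
        have := hsub x hx (T.erase v) (fun u hu w hr => by
          rw [mem_erase] at hu ⊢
          refine ⟨?_, hT u hu.2 w hr⟩
          rintro rfl
          exact hu.1 (hxu u hu.2 hr))
        rw [card_erase_of_mem hx, card_erase_of_mem hv] at this
        have := card_pos.2 ⟨v, hv⟩
        omega
      rw [Finset.card_filter, Finset.sum_product_right]
      calc 2 * T.card = ∑ v ∈ T, 2 := by simp [mul_comm]
        _ ≤ _ := by
          refine Finset.sum_le_sum fun v hv => ?_
          rw [← Finset.card_filter]
          exact h2 v hv

/-- transpose of a colored bipartite graph -/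
def trG {n q : ℕ} (f : Fin n × Fin n → Option (Fin q)) : Fin n × Fin n → Option (Fin q) :=
  fun e => f (e.2, e.1)

/-- `a` has few edges of color `i` to block `i`. -/
def bdV {n q : ℕ} (lab : Fin n → Option (Fin q)) (D : ℝ) (f : Fin n × Fin n → Option (Fin q))
    (i : Fin q) (a : Fin n) : Prop :=
  ((univ.filter fun u => lab u = some i ∧ f (a, u) = some i).card : ℝ) < D

/-- The quasi-random properties used. -/
structure HalfG {n q : ℕ} (lab : Fin n → Option (Fin q)) (K γ D D' X : ℝ) (t : ℕ)
    (f : Fin n × Fin n → Option (Fin q)) : Prop where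
  q1 : ∀ i : Fin q, ∀ S T : Finset (Fin n), γ ≤ S.card → γ ≤ T.card →
    ¬ (∀ e ∈ S ×ˢ T, f e ≠ some i)
  q2 : ∀ S T : Finset (Fin n), S.Nonempty → T.card ≤ S.card → (S.card : ℝ) ≤ K →
    ¬ (D' * S.card ≤ ((S ×ˢ T).filter fun e => f e ≠ none).card)
  q3a : ∀ (i : Fin q) (a : Fin n) (b : Fin t → Fin n), Function.Injective b →
    ¬ (∀ j, f (a, b j) ≠ none ∧ bdV lab D (trG f) i (b j))
  q3b : ∀ (i : Fin q) (a : Fin n) (b a' : Fin t → Fin n), Function.Injective b →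
    Function.Injective a' → (∀ j, a' j ≠ a) →
    ¬ (∀ j, f (a, b j) ≠ none ∧ f (a' j, b j) ≠ none ∧ bdV lab D f i (a' j))
  q4 : ∀ N : Finset (Fin n), X ≤ N.card → ¬ (∀ a ∈ N, ∃ i, bdV lab D f i a)
  q5 : ∀ S T : Finset (Fin n), (S.card : ℝ) ≤ K → T.card + 1 = S.card →
    ¬ ((∀ e ∈ S ×ˢ Tᶜ, f e = none) ∧ 2 * T.card ≤ ((S ×ˢ T).filter fun e => f e ≠ none).card)

section det
variable {n q : ℕ} {lab : Fin n → Option (Fin q)} {K γ D D' X : ℝ} {t : ℕ}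
  {f : Fin n × Fin n → Option (Fin q)}

lemma det_pm (hq : 1 ≤ q) (hγ : γ ≤ K) (hf : HalfG lab K γ D D' X t f)
    (ht : HalfG lab K γ D D' X t (trG f)) :
    ∃ σ : Equiv.Perm (Fin n), ∀ a, f (a, σ a) ≠ none := by
  classical
  have aux : ∀ f : Fin n × Fin n → Option (Fin q), HalfG lab K γ D D' X t f →
      ∀ S T : Finset (Fin n), (S.card : ℝ) ≤ K → (∀ u ∈ S, ∀ v, f (u, v) ≠ none → v ∈ T) →
      S.card ≤ T.card := by
    intro f hf S T hS hT
    by_contra hcon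
    push Not at hcon
    obtain ⟨S', T', h1, h2, h3, h4⟩ := min_violator (fun u v => f (u, v) ≠ none) S T hT hcon
    refine hf.q5 S' T' (le_trans (by exact_mod_cast card_le_card h1) hS) h2 ⟨?_, h4⟩
    rintro ⟨a, b⟩ he
    simp only [mem_product, mem_compl] at he
    simpa using h3 a he.1 b he.2
  refine hall_pm (fun u v => f (u, v) ≠ none) rfl K (aux f hf) ?_ ?_
  · intro S T hT h
    exact aux (trG f) ht T S hT h
  · intro S T hS hT
    have := hf.q1 ⟨0, hq⟩ S T (by linarith) (by linarith)
    push Not at this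
    obtain ⟨⟨a, b⟩, he, hfe⟩ := this
    rw [mem_product] at he
    exact ⟨a, he.1, b, he.2, by rw [hfe]; simp⟩

lemma det_exp (hf : HalfG lab K γ D D' X t f) (S T : Finset (Fin n)) (hS : (S.card : ℝ) ≤ K)
    (h : ∀ a ∈ S, D' ≤ (T.filter fun b => f (a, b) ≠ none).card) : S.card ≤ T.card := by
  classical
  by_contra hcon
  push Not at hcon
  refine hf.q2 S T (card_pos.1 (by omega)) hcon.le hS ?_
  rw [Finset.card_filter, Finset.sum_product]
  push_cast
  calc D' * S.card = ∑ a ∈ S, D' := by simp [mul_comm]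
    _ ≤ _ := by
      refine Finset.sum_le_sum fun a ha => ?_
      have := h a ha
      rw [Finset.card_filter] at this
      exact_mod_cast this

lemma det_lost (hf : HalfG lab K γ D D' X t f) (σ : Equiv.Perm (Fin n))
    (hσ : ∀ a, f (a, σ a) ≠ none) (a : Fin n) (ha : ∀ i, ¬ bdV lab D f i a) (Z : Finset (Fin n))
    (hZ : ∀ b ∈ Z, f (a, b) ≠ none ∧ ((∃ i, bdV lab D (trG f) i b) ∨
      ∃ i, bdV lab D f i (σ.symm b))) : Z.card ≤ 2 * q * t := by
  classical
  have key : ∀ N : Finset (Fin n), t ≤ N.card → ∃ b : Fin t → Fin n, Function.Injective b ∧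
      ∀ j, b j ∈ N := by
    intro N hN
    obtain ⟨N', hN', hc⟩ := Finset.exists_subset_card_eq hN
    exact ⟨N'.orderEmbOfFin hc, (N'.orderEmbOfFin hc).injective,
      fun j => hN' (N'.orderEmbOfFin_mem hc j)⟩
  have h1 : ∀ i : Fin q, (Z.filter fun b => bdV lab D (trG f) i b).card ≤ t := by
    intro i
    by_contra hcon
    obtain ⟨b, hb, hm⟩ := key (Z.filter fun b => bdV lab D (trG f) i b) (by omega)
    refine hf.q3a i a b hb fun j => ?_
    have := mem_filter.1 (hm j)
    exact ⟨(hZ _ this.1).1, this.2⟩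
  have h2 : ∀ i : Fin q, (Z.filter fun b => bdV lab D f i (σ.symm b)).card ≤ t := by
    intro i
    by_contra hcon
    obtain ⟨b, hb, hm⟩ := key (Z.filter fun b => bdV lab D f i (σ.symm b)) (by omega)
    refine hf.q3b i a b (fun j => σ.symm (b j)) hb (σ.symm.injective.comp hb) ?_ fun j => ?_
    · intro j h
      have := (mem_filter.1 (hm j)).2
      rw [h] at this
      exact ha i this
    · have := mem_filter.1 (hm j)
      refine ⟨(hZ _ this.1).1, ?_, this.2⟩
      simpa using hσ (σ.symm (b j))
  have h3 : Z ⊆ (univ.biUnion fun i : Fin q => Z.filter fun b => bdV lab D (trG f) i b) ∪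
      (univ.biUnion fun i : Fin q => Z.filter fun b => bdV lab D f i (σ.symm b)) := by
    intro b hb
    rcases (hZ b hb).2 with ⟨i, hi⟩ | ⟨i, hi⟩
    · exact mem_union_left _ (mem_biUnion.2 ⟨i, mem_univ _, mem_filter.2 ⟨hb, hi⟩⟩)
    · exact mem_union_right _ (mem_biUnion.2 ⟨i, mem_univ _, mem_filter.2 ⟨hb, hi⟩⟩)
  have h4 := card_biUnion_le_card_mul univ (fun i : Fin q => Z.filter fun b => bdV lab D (trG f) i b)
    t (fun i _ => h1 i)
  have h5 := card_biUnion_le_card_mul univ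
    (fun i : Fin q => Z.filter fun b => bdV lab D f i (σ.symm b)) t (fun i _ => h2 i)
  have h6 := (card_le_card h3).trans (card_union_le _ _)
  simp only [card_univ, Fintype.card_fin] at h4 h5
  calc _ ≤ _ := h6
    _ ≤ q * t + q * t := by omega
    _ = _ := by ring

lemma det_deg (hD : D' + 2 * q * t ≤ D) (hf : HalfG lab K γ D D' X t f) (σ : Equiv.Perm (Fin n))
    (hσ : ∀ a, f (a, σ a) ≠ none) (a : Fin n) (ha : ∀ i, ¬ bdV lab D f i a) (i : Fin q)
    (T : Finset (Fin n))
    (hT : ∀ b, lab b = some i → f (a, b) = some i → (∀ i, ¬ bdV lab D (trG f) i b) →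
      (∀ i, ¬ bdV lab D f i (σ.symm b)) → b ∈ T) :
    D' ≤ (T.filter fun b => f (a, b) ≠ none).card := by
  classical
  set N := univ.filter fun u => lab u = some i ∧ f (a, u) = some i with hN
  have h1 : D ≤ N.card := not_lt.1 (ha i)
  have h2 := det_lost hf σ hσ a ha (N.filter fun b => (∃ i, bdV lab D (trG f) i b) ∨
      ∃ i, bdV lab D f i (σ.symm b)) (by
    intro b hb
    simp only [hN, mem_filter, mem_univ, true_and] at hb
    exact ⟨by rw [hb.1.2]; simp, hb.2⟩)
  have h3 := Finset.card_filter_add_card_filter_not (s := N) (fun b => (∃ i, bdV lab D (trG f) i b) ∨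
      ∃ i, bdV lab D f i (σ.symm b))
  have h4 : (N.filter fun b => ¬ ((∃ i, bdV lab D (trG f) i b) ∨
      ∃ i, bdV lab D f i (σ.symm b))) ⊆ T.filter fun b => f (a, b) ≠ none := by
    intro b hb
    simp only [hN, mem_filter, mem_univ, true_and, not_or, not_exists] at hb
    rw [mem_filter]
    exact ⟨hT b hb.1.1 hb.1.2 hb.2.1 hb.2.2, by rw [hb.1.2]; simp⟩
  have h5 := card_le_card h4
  have h6 : (N.card : ℝ) ≤ (T.filter fun b => f (a, b) ≠ none).card + 2 * q * t := by
    have : N.card ≤ (T.filter fun b => f (a, b) ≠ none).card + 2 * q * t := by omega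
    exact_mod_cast this
  linarith

end det

lemma det_main {n q : ℕ} {lab : Fin n → Option (Fin q)} {K γ D D' X : ℝ} {t : ℕ}
    {f : Fin n × Fin n → Option (Fin q)} (hq : 1 ≤ q) (hγ0 : 0 ≤ γ) (hγ : γ * q ≤ K)
    (hD : D' + 2 * q * t ≤ D) (hf : HalfG lab K γ D D' X t f)
    (ht : HalfG lab K γ D D' X t (trG f)) (m : Fin q → ℕ) (hm : ∑ i, m i = n)
    (hL : ∀ i, ((univ.filter fun u => lab u = some i).card : ℝ) + 2 * X ≤ m i) :
    ∃ σ : Equiv.Perm (Fin n), (∀ a, f (a, σ a) ≠ none) ∧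
            ∀ i, (univ.filter fun a => f (a, σ a) = some i).card = m i := by
  classical
  have hq1 : (1 : ℝ) ≤ q := by exact_mod_cast hq
  have hγK : γ ≤ K := by nlinarith
  obtain ⟨σ, hσ⟩ := det_pm hq hγK hf ht
  set badA : Fin n → Prop := fun a => ∃ i, bdV lab D f i a with hbadA
  set badB : Fin n → Prop := fun a => ∃ i, bdV lab D (trG f) i a with hbadB
  set P : Fin n → Prop := fun a => badA a ∨ badB (σ a) with hP
  set Q : Fin n → Prop := fun b => badB b ∨ badA (σ.symm b) with hQ
  have hPQ : ∀ a, P a ↔ Q (σ a) := by intro a; simp only [hP, hQ, Equiv.symm_apply_apply]; tauto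
  have hcA : ((univ.filter badA).card : ℝ) < X := by
    by_contra hcon
    exact hf.q4 _ (not_lt.1 hcon) (fun a ha => (mem_filter.1 ha).2)
  have hcB : ((univ.filter badB).card : ℝ) < X := by
    by_contra hcon
    exact ht.q4 _ (not_lt.1 hcon) (fun a ha => (mem_filter.1 ha).2)
  have hcP : ((univ.filter P).card : ℝ) ≤ 2 * X := by
    have h1 : univ.filter P ⊆ univ.filter badA ∪ (univ.filter badB).map σ.symm.toEmbedding := by
      intro a ha
      rcases (mem_filter.1 ha).2 with h | h
      · exact mem_union_left _ (by simp [h])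
      · refine mem_union_right _ (Finset.mem_map.2 ⟨σ a, by simp [h], by simp⟩)
    have h2 := (card_le_card h1).trans (card_union_le _ _)
    rw [card_map] at h2
    have h3 : ((univ.filter P).card : ℝ) ≤ (univ.filter badA).card + (univ.filter badB).card := by
      exact_mod_cast h2
    linarith
  set k : Fin q → ℕ := fun i => (univ.filter fun a => P a ∧ f (a, σ a) = some i).card with hk
  have hkX : ∀ i, (k i : ℝ) ≤ 2 * X := by
    intro i
    refine le_trans ?_ hcP
    have : k i ≤ (univ.filter P).card := card_le_card (fun a ha => by
      simp only [mem_filter, mem_univ, true_and] at ha ⊢; exact ha.1)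
    exact_mod_cast this
  have hksum : ∑ i, k i = (univ.filter P).card := by
    have h1 : (univ.filter P).card = ∑ o : Option (Fin q),
        ((univ.filter P).filter fun a => f (a, σ a) = o).card :=
      Finset.card_eq_sum_card_fiberwise (fun _ _ => by simp)
    rw [h1, Fintype.sum_option]
    have h2 : ((univ.filter P).filter fun a => f (a, σ a) = none).card = 0 := by
      rw [card_eq_zero, filter_eq_empty_iff]
      intro a _
      exact hσ a
    rw [h2, zero_add]
    refine Finset.sum_congr rfl fun i _ => ?_
    rw [filter_filter]
  have hLm : ∀ i, (univ.filter fun u => lab u = some i).card + k i ≤ m i := by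
    intro i
    have := hL i
    have := hkX i
    have : ((univ.filter fun u => lab u = some i).card : ℝ) + k i ≤ m i := by linarith
    exact_mod_cast this
  obtain ⟨c, hc1, hc2⟩ := exists_assign (U := {a // ¬ P a}) (fun u => lab u.1) (fun i => m i - k i)
    (by
      intro i
      have h1 : (univ.filter fun u : {a // ¬ P a} => lab u.1 = some i).card ≤
          (univ.filter fun u => lab u = some i).card := by
        rw [← card_map (Function.Embedding.subtype _)]
        refine card_le_card fun a ha => ?_
        obtain ⟨x, hx, rfl⟩ := Finset.mem_map.1 ha
        simpa using hx
      have := hLm i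
      show _ ≤ m i - k i
      omega)
    (by
      rw [Fintype.card_subtype]
      have h1 : ∑ i, (m i - k i) + ∑ i, k i = ∑ i, m i := by
        rw [← Finset.sum_add_distrib]
        exact Finset.sum_congr rfl fun i _ => Nat.sub_add_cancel (by have := hLm i; omega)
      have h2 := Finset.card_filter_add_card_filter_not (s := (univ : Finset (Fin n))) P
      rw [card_univ, Fintype.card_fin] at h2
      omega)
  have hex : ∃ e : {a // ¬ P a} ≃ {b // ¬ Q b}, ∀ u, f (u.1, (e u).1) = some (c u) := by
    refine hall_pm (fun (u : {a // ¬ P a}) (v : {b // ¬ Q b}) => f (u.1, v.1) = some (c u)) ?_ K ?_ ?_ ?_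
    · exact Fintype.card_congr (σ.subtypeEquiv fun a => not_congr (hPQ a))
    · intro S T hS hT
      rw [← card_map (Function.Embedding.subtype _), ← card_map (s := T) (Function.Embedding.subtype _)]
      refine det_exp hf _ _ (by rwa [card_map]) ?_
      intro a ha
      obtain ⟨u, hu, rfl⟩ := Finset.mem_map.1 ha
      have hu2 := u.2
      simp only [hP, hbadA, not_or, not_exists] at hu2
      refine det_deg hD hf σ hσ u.1 hu2.1 (c u) _ ?_
      intro b hb1 hb2 hb3 hb4
      have hbQ : ¬ Q b := by
        simp only [hQ, hbadA, hbadB, not_or, not_exists]; exact ⟨hb3, hb4⟩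
      exact Finset.mem_map.2 ⟨⟨b, hbQ⟩, hT u hu ⟨b, hbQ⟩ hb2, rfl⟩
    · intro S T hS hT
      rw [← card_map (Function.Embedding.subtype _), ← card_map (s := S) (Function.Embedding.subtype _)]
      refine det_exp ht _ _ (by rwa [card_map]) ?_
      intro b hb
      obtain ⟨v, hv, rfl⟩ := Finset.mem_map.1 hb
      have hv2 := v.2
      simp only [hQ, hbadB, not_or, not_exists] at hv2
      refine det_deg hD ht σ.symm (fun b => ?_) v.1 hv2.1 ⟨0, hq⟩ _ ?_
      · simpa [trG] using hσ (σ.symm b)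
      intro a ha1 ha2 ha3 ha4
      have haP : ¬ P a := by
        simp only [hP, hbadA, hbadB, not_or, not_exists]; exact ⟨ha3, ha4⟩
      refine Finset.mem_map.2 ⟨⟨a, haP⟩, hT v hv ⟨a, haP⟩ ?_, rfl⟩
      rw [hc1 ⟨0, hq⟩ ⟨a, haP⟩ ha1]
      exact ha2
    · intro S T hS hT
      have h1 : ∃ i : Fin q, γ ≤ (S.filter fun u => c u = i).card := by
        by_contra hcon
        push Not at hcon
        have h2 : S.card = ∑ i : Fin q, (S.filter fun u => c u = i).card :=
          Finset.card_eq_sum_card_fiberwise (fun _ _ => by simp)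
        have h3 : (S.card : ℝ) ≤ ∑ i : Fin q, γ := by
          rw [h2]; push_cast
          exact Finset.sum_le_sum fun i _ => (hcon i).le
        simp at h3
        linarith
      obtain ⟨i, hi⟩ := h1
      have := hf.q1 i ((S.filter fun u => c u = i).map (Function.Embedding.subtype _))
        (T.map (Function.Embedding.subtype _)) (by rwa [card_map]) (by rw [card_map]; linarith)
      push Not at this
      obtain ⟨⟨a, b⟩, he, hfe⟩ := this
      rw [mem_product] at he
      obtain ⟨u, hu, rfl⟩ := Finset.mem_map.1 he.1
      obtain ⟨v, hv, rfl⟩ := Finset.mem_map.1 he.2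
      rw [mem_filter] at hu
      exact ⟨u, hu.1, v, hv, by rw [hu.2]; exact hfe⟩
  obtain ⟨e, he⟩ := hex
  set τ : Equiv.Perm (Fin n) := Equiv.subtypeCongr (σ.subtypeEquiv hPQ) e with hτ
  have hτ1 : ∀ a, P a → τ a = σ a := by
    intro a ha
    simp [hτ, Equiv.subtypeCongr, Equiv.sumCompl_symm_apply_of_pos, ha]
  have hτ2 : ∀ a (ha : ¬ P a), τ a = (e ⟨a, ha⟩).1 := by
    intro a ha
    simp [hτ, Equiv.subtypeCongr, Equiv.sumCompl_symm_apply_of_neg, ha]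
  refine ⟨τ, fun a => ?_, fun i => ?_⟩
  · by_cases ha : P a
    · rw [hτ1 a ha]; exact hσ a
    · rw [hτ2 a ha, he ⟨a, ha⟩]; simp
  · have h1 : (univ.filter fun a => f (a, τ a) = some i) =
        (univ.filter fun a => P a ∧ f (a, σ a) = some i) ∪
        ((univ.filter fun u : {a // ¬ P a} => c u = i).map (Function.Embedding.subtype _)) := by
      ext a
      by_cases ha : P a
      · simp [hτ1 a ha, ha]
      · simp [hτ2 a ha, ha, he ⟨a, ha⟩]
    rw [h1, card_union_of_disjoint, card_map, hc2 i]
    · have := hLm i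
      show k i + (m i - k i) = m i
      omega
    · rw [Finset.disjoint_left]
      intro a ha ha'
      obtain ⟨x, _, rfl⟩ := Finset.mem_map.1 ha'
      exact x.2 (mem_filter.1 ha).2.1

/-- weights of edge states -/
noncomputable def wtE {q : ℕ} (α : Fin q → ℝ) (p : ℝ) : Option (Fin q) → ℝ
  | none => 1 - p
  | some i => α i * p

open Classical in
/-- probability as a finite sum -/
noncomputable def PrG {n q : ℕ} (α : Fin q → ℝ) (p : ℝ)
    (E : (Fin n × Fin n → Option (Fin q)) → Prop) : ℝ :=
  ∑ f, (∏ e, wtE α p (f e)) * if E f then 1 else 0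

section prob
variable {n q : ℕ} {α : Fin q → ℝ} {p : ℝ}

lemma wtE_nonneg (hα : ∀ i, 0 < α i) (hp0 : 0 ≤ p) (hp1 : p ≤ 1) (x : Option (Fin q)) :
    0 ≤ wtE α p x := by
  cases x with
  | none => simp only [wtE]; linarith
  | some i => exact mul_nonneg (hα i).le hp0

lemma wtE_sum_none (hsum : ∑ i, α i = 1) (y z : ℝ) :
    ∑ x, wtE α p x * (if x = none then y else z) = (1 - p) * y + p * z := by
  rw [Fintype.sum_option]
  simp only [wtE, if_true, reduceCtorEq, if_false]
  rw [← Finset.sum_mul, ← Finset.sum_mul, hsum, one_mul]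

lemma wtE_sum_some (hsum : ∑ i, α i = 1) (i : Fin q) (y : ℝ) :
    ∑ x, wtE α p x * (if x = some i then y else 1) = 1 - α i * p + α i * p * y := by
  have h : ∀ x, wtE α p x * (if x = some i then y else 1) =
      wtE α p x * (if x = none then 1 else 1) + if x = some i then wtE α p x * (y - 1) else 0 := by
    intro x; split_ifs <;> ring
  simp_rw [h]
  rw [Finset.sum_add_distrib, wtE_sum_none hsum]
  simp [wtE]
  ring

lemma wtE_sum (hsum : ∑ i, α i = 1) : ∑ x, wtE α p x = 1 := by
  have := wtE_sum_none (p := p) hsum 1 1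
  simp only [ite_self, mul_one] at this
  rw [this]; ring

lemma sum_prod_wt (hsum : ∑ i, α i = 1) (F1 F2 : Finset (Fin n × Fin n)) (hd : Disjoint F1 F2)
    (g1 g2 : Option (Fin q) → ℝ) :
    ∑ f : Fin n × Fin n → Option (Fin q), (∏ e, wtE α p (f e)) *
      ((∏ e ∈ F1, g1 (f e)) * ∏ e ∈ F2, g2 (f e)) =
    (∑ x, wtE α p x * g1 x) ^ F1.card * (∑ x, wtE α p x * g2 x) ^ F2.card := by
  classical
  have h1 : ∀ f : Fin n × Fin n → Option (Fin q), (∏ e, wtE α p (f e)) *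
      ((∏ e ∈ F1, g1 (f e)) * ∏ e ∈ F2, g2 (f e)) =
      ∏ e, (wtE α p (f e) * ((if e ∈ F1 then g1 (f e) else 1) * (if e ∈ F2 then g2 (f e) else 1))) := by
    intro f
    rw [Finset.prod_mul_distrib, Finset.prod_mul_distrib]
    congr 2 <;> simp [Finset.prod_ite_mem]
  simp_rw [h1]
  have h2 := Finset.prod_univ_sum (fun _ : Fin n × Fin n => (univ : Finset (Option (Fin q))))
    (fun e x => wtE α p x * ((if e ∈ F1 then g1 x else 1) * (if e ∈ F2 then g2 x else 1)))
  rw [Fintype.piFinset_univ] at h2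
  rw [← h2]
  have h3 : ∀ e : Fin n × Fin n, ∑ x, wtE α p x * ((if e ∈ F1 then g1 x else 1) *
      (if e ∈ F2 then g2 x else 1)) = (if e ∈ F1 then ∑ x, wtE α p x * g1 x else 1) *
      (if e ∈ F2 then ∑ x, wtE α p x * g2 x else 1) := by
    intro e
    by_cases he1 : e ∈ F1
    · have he2 := Finset.disjoint_left.1 hd he1
      simp [he1, he2]
    · by_cases he2 : e ∈ F2
      · simp [he1, he2]
      · simp [he1, he2, wtE_sum hsum]
  simp_rw [h3]
  rw [Finset.prod_mul_distrib]
  simp [Finset.prod_ite_mem]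

lemma PrG_nonneg (hα : ∀ i, 0 < α i) (hp0 : 0 ≤ p) (hp1 : p ≤ 1)
    (E : (Fin n × Fin n → Option (Fin q)) → Prop) : 0 ≤ PrG α p E := by
  classical
  refine Finset.sum_nonneg fun f _ => mul_nonneg
    (Finset.prod_nonneg fun e _ => wtE_nonneg hα hp0 hp1 _) ?_
  split_ifs <;> norm_num

lemma PrG_cyl (hα : ∀ i, 0 < α i) (hsum : ∑ i, α i = 1) (hp0 : 0 ≤ p) (hp1 : p ≤ 1)
    (E : (Fin n × Fin n → Option (Fin q)) → Prop) (F1 F2 : Finset (Fin n × Fin n))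
    (hd : Disjoint F1 F2) (g1 g2 : Option (Fin q) → ℝ) (hg1 : ∀ x, 0 ≤ g1 x) (hg2 : ∀ x, 0 ≤ g2 x)
    (C : ℝ) (hC : 0 ≤ C)
    (hE : ∀ f, E f → 1 ≤ C * ((∏ e ∈ F1, g1 (f e)) * ∏ e ∈ F2, g2 (f e))) :
    PrG α p E ≤ C * ((∑ x, wtE α p x * g1 x) ^ F1.card * (∑ x, wtE α p x * g2 x) ^ F2.card) := by
  classical
  rw [← sum_prod_wt hsum F1 F2 hd g1 g2, Finset.mul_sum]
  refine Finset.sum_le_sum fun f _ => ?_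
  have h0 : 0 ≤ ∏ e, wtE α p (f e) := Finset.prod_nonneg fun e _ => wtE_nonneg hα hp0 hp1 _
  have h1 : (if E f then (1 : ℝ) else 0) ≤ C * ((∏ e ∈ F1, g1 (f e)) * ∏ e ∈ F2, g2 (f e)) := by
    split_ifs with h
    · exact hE f h
    · exact mul_nonneg hC (mul_nonneg (Finset.prod_nonneg fun e _ => hg1 _)
        (Finset.prod_nonneg fun e _ => hg2 _))
  calc _ ≤ (∏ e, wtE α p (f e)) * (C * ((∏ e ∈ F1, g1 (f e)) * ∏ e ∈ F2, g2 (f e))) :=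
        mul_le_mul_of_nonneg_left (by convert h1) h0
    _ = _ := by ring

lemma PrG_union (hα : ∀ i, 0 < α i) (hp0 : 0 ≤ p) (hp1 : p ≤ 1) {ι : Type*} (J : Finset ι)
    (E : (Fin n × Fin n → Option (Fin q)) → Prop)
    (Ej : ι → (Fin n × Fin n → Option (Fin q)) → Prop) (h : ∀ f, E f → ∃ j ∈ J, Ej j f) :
    PrG α p E ≤ ∑ j ∈ J, PrG α p (Ej j) := by
  classical
  unfold PrG
  rw [Finset.sum_comm]
  refine Finset.sum_le_sum fun f _ => ?_
  rw [← Finset.mul_sum]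
  refine mul_le_mul_of_nonneg_left ?_ (Finset.prod_nonneg fun e _ => wtE_nonneg hα hp0 hp1 _)
  have h0 : ∀ j ∈ J, (0 : ℝ) ≤ if Ej j f then 1 else 0 := by
    intro j _; split_ifs <;> norm_num
  split_ifs with hf
  · obtain ⟨j, hj, hjf⟩ := h f hf
    calc (1 : ℝ) = if Ej j f then 1 else 0 := by simp [hjf]
      _ ≤ _ := Finset.single_le_sum (f := fun j => if Ej j f then (1 : ℝ) else 0) h0 hj
  · exact Finset.sum_nonneg h0

/-- Markov -/
lemma PrG_markov (hα : ∀ i, 0 < α i) (hp0 : 0 ≤ p) (hp1 : p ≤ 1) {ι : Type*} (J : Finset ι)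
    (E : (Fin n × Fin n → Option (Fin q)) → Prop) (X : ℝ) (hX : 0 < X)
    (Ej : ι → (Fin n × Fin n → Option (Fin q)) → Prop)
    (h : ∀ f, E f → ∃ J' ⊆ J, X ≤ J'.card ∧ ∀ j ∈ J', Ej j f) :
    PrG α p E ≤ (∑ j ∈ J, PrG α p (Ej j)) / X := by
  classical
  rw [le_div_iff₀ hX]
  unfold PrG
  rw [Finset.sum_comm, Finset.sum_mul]
  refine Finset.sum_le_sum fun f _ => ?_
  rw [← Finset.mul_sum, mul_assoc]
  refine mul_le_mul_of_nonneg_left ?_ (Finset.prod_nonneg fun e _ => wtE_nonneg hα hp0 hp1 _)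
  have h0 : ∀ j, (0 : ℝ) ≤ if Ej j f then 1 else 0 := by
    intro j; split_ifs <;> norm_num
  split_ifs with hf
  · obtain ⟨J', hJ', hc, hj⟩ := h f hf
    calc 1 * X ≤ J'.card := by simpa using hc
      _ = ∑ j ∈ J', if Ej j f then (1 : ℝ) else 0 := by
        rw [Finset.sum_congr rfl (fun j hjj => if_pos (hj j hjj))]; simp
      _ ≤ _ := Finset.sum_le_sum_of_subset_of_nonneg hJ' (fun j _ _ => h0 j)
  · rw [zero_mul]; exact Finset.sum_nonneg fun j _ => h0 j

lemma PrG_tr (E : (Fin n × Fin n → Option (Fin q)) → Prop) :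
    PrG α p (fun f => E (trG f)) = PrG α p E := by
  classical
  unfold PrG
  let T : (Fin n × Fin n → Option (Fin q)) ≃ (Fin n × Fin n → Option (Fin q)) :=
    ⟨trG, trG, fun f => rfl, fun f => rfl⟩
  rw [← T.sum_comp]
  refine Finset.sum_congr rfl fun f _ => ?_
  congr 1
  exact (Equiv.prod_comp (Equiv.prodComm (Fin n) (Fin n)) (fun e => wtE α p (f e)))

lemma PrG_compl (hsum : ∑ i, α i = 1) (E : (Fin n × Fin n → Option (Fin q)) → Prop) :
    PrG α p E = 1 - PrG α p (fun f => ¬ E f) := by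
  classical
  have h := sum_prod_wt (n := n) (p := p) hsum ∅ ∅ (by simp) (fun _ => 1) (fun _ => 1)
  simp only [prod_empty, card_empty, pow_zero, mul_one] at h
  rw [← h]
  unfold PrG
  rw [← Finset.sum_sub_distrib]
  refine Finset.sum_congr rfl fun f _ => ?_
  by_cases hf : E f <;> simp [hf]

lemma colorM_singleton (x : Option (Fin q)) :
    colorM q α p {x} = ENNReal.ofReal (wtE α p x) := by
  unfold colorM
  cases x with
  | none => simp [wtE, Set.indicator]
  | some i =>
    simp only [Measure.add_apply, Measure.smul_apply, Measure.finsetSum_apply, smul_eq_mul,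
      Measure.dirac_apply, wtE]
    simp [Set.indicator]

lemma graphM_eq (hα : ∀ i, 0 < α i) (hp0 : 0 ≤ p) (hp1 : p ≤ 1)
    (E : (Fin n × Fin n → Option (Fin q)) → Prop) :
    graphM n q α p {f | E f} = ENNReal.ofReal (PrG α p E) := by
  classical
  have : IsFiniteMeasure (colorM q α p) := by
    unfold colorM
    constructor
    simp [ENNReal.sum_lt_top]
  have : MeasurableSingletonClass (Option (Fin q)) := ⟨fun x => trivial⟩
  have h1 : {f : Fin n × Fin n → Option (Fin q) | E f} = ((univ.filter E : Finset _) : Set _) := by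
    ext f; simp
  rw [h1, ← sum_measure_singleton]
  unfold PrG
  rw [ENNReal.ofReal_sum_of_nonneg (fun f _ => mul_nonneg
    (Finset.prod_nonneg fun e _ => wtE_nonneg hα hp0 hp1 _) (by split_ifs <;> norm_num)),
    Finset.sum_filter]
  refine Finset.sum_congr rfl fun f _ => ?_
  by_cases hf : E f
  · simp only [hf, if_true, mul_one]
    unfold graphM
    rw [Measure.pi_singleton, ENNReal.ofReal_prod_of_nonneg (fun e _ => wtE_nonneg hα hp0 hp1 _)]
    exact Finset.prod_congr rfl fun e _ => colorM_singleton _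
  · simp [hf]

end prob

section events
variable {n q : ℕ} {α : Fin q → ℝ} {p : ℝ}

lemma prod_ite_count {ι : Type*} (F : Finset ι) (P : ι → Prop) [DecidablePred P] (y : ℝ) :
    ∏ e ∈ F, (if P e then y else 1) = y ^ (F.filter P).card := by
  rw [Finset.prod_ite]; simp

lemma prod_ite_one {ι : Type*} (F : Finset ι) (P : ι → Prop) [DecidablePred P] 
    (h : ∀ e ∈ F, P e) : ∏ e ∈ F, (if P e then (1 : ℝ) else 0) = 1 := by
  exact Finset.prod_eq_one fun e he => if_pos (h e he)

lemma ev1 (hα : ∀ i, 0 < α i) (hsum : ∑ i, α i = 1) (hp0 : 0 ≤ p) (hp1 : p ≤ 1)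
    (a0 : ℝ) (ha0 : 0 ≤ a0) (ha : ∀ i, a0 ≤ α i) (γ : ℝ) (hγ : 0 ≤ γ) :
    PrG (n := n) α p (fun f => ∃ i : Fin q, ∃ S T : Finset (Fin n), γ ≤ S.card ∧ γ ≤ T.card ∧
      ∀ e ∈ S ×ˢ T, f e ≠ some i) ≤ q * 4 ^ n * Real.exp (-(a0 * p * γ ^ 2)) := by
  classical
  refine (PrG_union hα hp0 hp1 (univ : Finset (Fin q × Finset (Fin n) × Finset (Fin n))) _
    (fun j f => (γ ≤ j.2.1.card ∧ γ ≤ j.2.2.card) ∧ ∀ e ∈ j.2.1 ×ˢ j.2.2, f e ≠ some j.1) ?_).trans ?_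
  · rintro f ⟨i, S, T, h1, h2, h3⟩
    exact ⟨(i, S, T), mem_univ _, ⟨h1, h2⟩, h3⟩
  have hj : ∀ j ∈ (univ : Finset (Fin q × Finset (Fin n) × Finset (Fin n))), PrG α p
      (fun f => (γ ≤ j.2.1.card ∧ γ ≤ j.2.2.card) ∧ ∀ e ∈ j.2.1 ×ˢ j.2.2, f e ≠ some j.1) ≤
      Real.exp (-(a0 * p * γ ^ 2)) := by
    rintro ⟨i, S, T⟩ -
    by_cases hST : γ ≤ S.card ∧ γ ≤ T.card
    · refine (PrG_cyl hα hsum hp0 hp1 _ (S ×ˢ T) ∅ (by simp) (fun x => if x = some i then 0 else 1)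
        (fun _ => 1) (fun x => by positivity) (fun x => by positivity) 1 (by norm_num) ?_).trans ?_
      · rintro f ⟨-, h⟩
        rw [Finset.prod_congr rfl (fun e he => if_neg (h e he))]
        simp
      · rw [wtE_sum_some hsum]
        simp only [mul_zero, add_zero, card_empty, pow_zero, mul_one, one_mul, card_product]
        have h1 : 0 ≤ 1 - α i * p := by
          have : α i ≤ 1 := hsum ▸ Finset.single_le_sum (fun i _ => (hα i).le) (mem_univ i)
          nlinarith [hα i]
        calc (1 - α i * p) ^ (S.card * T.card) ≤ (Real.exp (-(α i * p))) ^ (S.card * T.card) :=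
              pow_le_pow_left₀ h1 (by have := Real.add_one_le_exp (-(α i * p)); linarith) _
          _ = Real.exp (-(α i * p * (S.card * T.card))) := by
              rw [← Real.exp_nat_mul]; push_cast; ring_nf
          _ ≤ _ := by
              rw [Real.exp_le_exp, neg_le_neg_iff]
              have h2 : γ ^ 2 ≤ S.card * T.card := by nlinarith [hST.1, hST.2]
              have h3 : a0 * p ≤ α i * p := mul_le_mul_of_nonneg_right (ha i) hp0
              exact mul_le_mul h3 h2 (by positivity) (by have := hα i; positivity)
    · have : PrG α p (fun f : Fin n × Fin n → Option (Fin q) => (γ ≤ S.card ∧ γ ≤ T.card) ∧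
          ∀ e ∈ S ×ˢ T, f e ≠ some i) = 0 := by
        unfold PrG
        exact Finset.sum_eq_zero fun f _ => by simp [hST]
      exact this.le.trans (Real.exp_nonneg _)
  refine (Finset.sum_le_card_nsmul _ _ _ hj).trans (le_of_eq ?_)
  simp only [card_univ, Fintype.card_prod, Fintype.card_fin, Fintype.card_finset, nsmul_eq_mul]
  push_cast
  rw [show (4 : ℝ) = 2 * 2 by norm_num, mul_pow]

lemma ev2 (hα : ∀ i, 0 < α i) (hsum : ∑ i, α i = 1) (hp0 : 0 ≤ p) (hp1 : p ≤ 1)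
    (l D' K N : ℝ) (hl : 0 ≤ l) (hN : 0 ≤ N) (h1 : p * Real.exp l * K ≤ N) (h2 : l * D' = 5 * N) :
    PrG (n := n) α p (fun f => ∃ S T : Finset (Fin n), S.Nonempty ∧ T.card ≤ S.card ∧
      (S.card : ℝ) ≤ K ∧ D' * S.card ≤ ((S ×ˢ T).filter fun e => f e ≠ none).card) ≤
      ((1 + Real.exp (-2 * N)) ^ n - 1) * (1 + Real.exp (-2 * N)) ^ n := by
  classical
  refine (PrG_union hα hp0 hp1 ((univ.erase ∅ : Finset (Finset (Fin n))) ×ˢ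
    (univ : Finset (Finset (Fin n)))) _
    (fun j f => (j.2.card ≤ j.1.card ∧ (j.1.card : ℝ) ≤ K) ∧
      D' * j.1.card ≤ ((j.1 ×ˢ j.2).filter fun e => f e ≠ none).card) ?_).trans ?_
  · rintro f ⟨S, T, h1, h2, h3, h4⟩
    exact ⟨(S, T), by simp [h1.ne_empty], ⟨h2, h3⟩, h4⟩
  set x := Real.exp (-2 * N) with hx
  have hs : ∑ S : Finset (Fin n), x ^ S.card = (1 + x) ^ n := by
    have := Finset.sum_pow_mul_eq_add_pow x 1 (univ : Finset (Fin n))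
    simp only [one_pow, mul_one, powerset_univ, card_univ, Fintype.card_fin] at this
    rw [this, add_comm]
  have hs' : ∑ S ∈ (univ.erase ∅ : Finset (Finset (Fin n))), x ^ S.card = (1 + x) ^ n - 1 := by
    rw [← hs, ← Finset.add_sum_erase _ _ (mem_univ (∅ : Finset (Fin n)))]; simp
  rw [← hs', ← hs, Finset.sum_mul_sum, ← Finset.sum_product']
  refine Finset.sum_le_sum ?_
  rintro ⟨S, T⟩ -
  by_cases hST : T.card ≤ S.card ∧ (S.card : ℝ) ≤ K
  · refine (PrG_cyl hα hsum hp0 hp1 _ (S ×ˢ T) ∅ (by simp)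
      (fun x => if x = none then 1 else Real.exp l)
        (fun _ => 1) (fun x => by positivity) (fun x => by positivity) (Real.exp (-(l * D' * S.card)))
        (by positivity) ?_).trans ?_
    · rintro f ⟨-, h⟩
      have : ∀ e ∈ S ×ˢ T, (if f e = none then (1 : ℝ) else Real.exp l) =
        if f e ≠ none then Real.exp l else 1 := fun e _ => by split_ifs <;> simp_all
      rw [Finset.prod_congr rfl this, prod_ite_count, prod_empty, mul_one, ← Real.exp_nat_mul,
        ← Real.exp_add]
      apply Real.one_le_exp
      have := mul_le_mul_of_nonneg_left h hl
      simp only at this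
      nlinarith
    · rw [wtE_sum_none hsum]
      simp only [card_empty, pow_zero, mul_one, card_product]
      have h3 : 1 - p + p * Real.exp l ≤ Real.exp (p * Real.exp l) := by
        have := Real.add_one_le_exp (p * Real.exp l); linarith
      calc Real.exp (-(l * D' * S.card)) * (1 - p + p * Real.exp l) ^ (S.card * T.card)
          ≤ Real.exp (-(l * D' * S.card)) * Real.exp (p * Real.exp l) ^ (S.card * T.card) := by
            gcongr
        _ = Real.exp (-(5 * N * S.card) + p * Real.exp l * T.card * S.card) := by
            rw [h2, Real.exp_add, ← Real.exp_nat_mul (p * Real.exp l)]; push_cast; ring_nf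
        _ ≤ Real.exp (-2 * N * S.card + -2 * N * T.card) := by
            rw [Real.exp_le_exp]
            have hTS : (T.card : ℝ) ≤ S.card := by exact_mod_cast hST.1
            have h4 : p * Real.exp l * T.card ≤ N := le_trans
              (mul_le_mul_of_nonneg_left (hTS.trans hST.2) (by positivity)) h1
            have h5 := mul_le_mul_of_nonneg_right h4 (Nat.cast_nonneg (α := ℝ) S.card)
            have h6 := mul_le_mul_of_nonneg_left hTS hN
            nlinarith
        _ = x ^ S.card * x ^ T.card := by
            rw [Real.exp_add, hx, ← Real.exp_nat_mul, ← Real.exp_nat_mul]; ring_nf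
  · have : PrG α p (fun f : Fin n × Fin n → Option (Fin q) => (T.card ≤ S.card ∧ (S.card : ℝ) ≤ K) ∧
      D' * S.card ≤ ((S ×ˢ T).filter fun e => f e ≠ none).card) = 0 := by
        unfold PrG
        exact Finset.sum_eq_zero fun f _ => by rw [if_neg (fun h => hST h.1), mul_zero]
    exact this.le.trans (by positivity)

end events

section events2
variable {n q : ℕ} {α : Fin q → ℝ} {p : ℝ}

lemma bad_chern (lab : Fin n → Option (Fin q)) (D : ℝ) (f : Fin n × Fin n → Option (Fin q))
    (i : Fin q) (B U : Finset (Fin n)) (hU : ∀ u ∈ U, lab u = some i)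
    (hB : ∀ b ∈ B, bdV lab D f i b) :
    1 ≤ Real.exp (D * B.card) * ∏ e ∈ B ×ˢ U, (if f e = some i then Real.exp (-1) else 1) := by
  classical
  rw [prod_ite_count, ← Real.exp_nat_mul, ← Real.exp_add]
  apply Real.one_le_exp
  have h : (((B ×ˢ U).filter fun e => f e = some i).card : ℝ) ≤ ∑ b ∈ B, D := by
    rw [Finset.card_filter, Finset.sum_product]
    push_cast
    refine Finset.sum_le_sum fun b hb => ?_
    refine le_trans ?_ (hB b hb).le
    have : ∑ u ∈ U, (if f (b, u) = some i then 1 else 0) ≤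
        (univ.filter fun u => lab u = some i ∧ f (b, u) = some i).card := by
      rw [← Finset.card_filter]
      refine card_le_card fun u hu => ?_
      simp only [mem_filter, mem_univ, true_and] at hu ⊢
      exact ⟨hU u hu.1, hu.2⟩
    exact_mod_cast this
  rw [Finset.sum_const, nsmul_eq_mul] at h
  linarith

lemma bad_wt (hα : ∀ i, 0 < α i) (hsum : ∑ i, α i = 1) (hp0 : 0 ≤ p) (hp1 : p ≤ 1)
    (a0 : ℝ) (ha0 : 0 ≤ a0) (ha : ∀ i, a0 ≤ α i) (i : Fin q) (D M : ℝ) (B U : Finset (Fin n))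
    (hM : M ≤ U.card) :
    Real.exp (D * B.card) *
      (∑ x, wtE α p x * (if x = some i then Real.exp (-1) else 1)) ^ (B ×ˢ U).card ≤
      Real.exp (D - a0 * p * M / 2) ^ B.card := by
  rw [wtE_sum_some hsum, card_product]
  have he : Real.exp (-1) ≤ 1 / 2 := by
    rw [Real.exp_neg, one_div]
    exact inv_anti₀ (by norm_num) (by have := Real.add_one_le_exp (1 : ℝ); linarith)
  have hap : a0 * p ≤ α i * p := mul_le_mul_of_nonneg_right (ha i) hp0
  have h0 : 0 ≤ 1 - α i * p + α i * p * Real.exp (-1) := by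
    have : α i ≤ 1 := hsum ▸ Finset.single_le_sum (fun i _ => (hα i).le) (mem_univ i)
    have h1 : 0 ≤ 1 - α i * p := by nlinarith [hα i]
    have := hα i
    positivity
  have h1 : 1 - α i * p + α i * p * Real.exp (-1) ≤ Real.exp (-(a0 * p / 2)) := by
    have h2 := Real.add_one_le_exp (-(a0 * p / 2))
    have h3 : 0 ≤ α i * p := mul_nonneg (hα i).le hp0
    nlinarith
  calc _ ≤ Real.exp (D * B.card) * Real.exp (-(a0 * p / 2)) ^ (B.card * U.card) := by
        gcongr
    _ = Real.exp (D * B.card - a0 * p / 2 * (B.card * U.card)) := by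
        rw [sub_eq_add_neg, Real.exp_add, ← Real.exp_nat_mul]; push_cast; ring_nf
    _ ≤ Real.exp (B.card * (D - a0 * p * M / 2)) := by
        rw [Real.exp_le_exp]
        have h4 : a0 * p / 2 * B.card * M ≤ a0 * p / 2 * B.card * U.card :=
          mul_le_mul_of_nonneg_left hM (by positivity)
        nlinarith
    _ = _ := by rw [Real.exp_nat_mul]

lemma ev3a (hα : ∀ i, 0 < α i) (hsum : ∑ i, α i = 1) (hp0 : 0 ≤ p) (hp1 : p ≤ 1)
    (a0 : ℝ) (ha0 : 0 ≤ a0) (ha : ∀ i, a0 ≤ α i) (lab : Fin n → Option (Fin q)) (D : ℝ) (L t : ℕ)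
    (ht : 1 ≤ t) (hL : ∀ i, L ≤ (univ.filter fun u => lab u = some i).card) :
    PrG (n := n) α p (fun f => ∃ (i : Fin q) (a : Fin n) (b : Fin t → Fin n), Function.Injective b ∧
      ∀ j, trG f (a, b j) ≠ none ∧ bdV lab D f i (b j)) ≤
      q * n * n ^ t * (p * Real.exp (D - a0 * p * (L - t) / 2)) ^ t := by
  classical
  refine (PrG_union hα hp0 hp1 (univ : Finset (Fin q × Fin n × (Fin t → Fin n))) _
    (fun j f => Function.Injective j.2.2 ∧
      ∀ k, trG f (j.2.1, j.2.2 k) ≠ none ∧ bdV lab D f j.1 (j.2.2 k)) ?_).trans ?_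
  · rintro f ⟨i, a, b, hb, h⟩
    exact ⟨(i, a, b), mem_univ _, hb, h⟩
  have hj : ∀ j ∈ (univ : Finset (Fin q × Fin n × (Fin t → Fin n))), PrG α p
      (fun f => Function.Injective j.2.2 ∧
      ∀ k, trG f (j.2.1, j.2.2 k) ≠ none ∧ bdV lab D f j.1 (j.2.2 k)) ≤
      (p * Real.exp (D - a0 * p * (L - t) / 2)) ^ t := by
    rintro ⟨i, a, b⟩ -
    by_cases hb : Function.Injective b
    · have hcard : (univ.image b).card = t := by
        rw [card_image_of_injective _ hb]; simp
      refine (PrG_cyl hα hsum hp0 hp1 _ (univ.image b ×ˢ {a})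
        (univ.image b ×ˢ (univ.filter fun u => lab u = some i).erase a)
        ?_ (fun x => if x = none then 0 else 1)
        (fun x => if x = some i then Real.exp (-1) else 1) (fun x => by positivity)
        (fun x => by positivity) (Real.exp (D * (univ.image b).card)) (by positivity) ?_).trans ?_
      · rw [Finset.disjoint_left]
        rintro ⟨x, y⟩ h1 h2
        simp only [mem_product, mem_singleton, mem_erase] at h1 h2
        exact h2.2.1 h1.2
      · rintro f ⟨-, h⟩
        have h1 : ∏ e ∈ univ.image b ×ˢ {a}, (if f e = none then (0 : ℝ) else 1) = 1 := by
          refine Finset.prod_eq_one ?_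
          rintro ⟨x, y⟩ hxy
          simp only [mem_product, mem_image, mem_univ, true_and, mem_singleton] at hxy
          obtain ⟨⟨k, rfl⟩, rfl⟩ := hxy
          exact if_neg (h k).1
        rw [h1, one_mul]
        refine bad_chern lab D f i _ _ (fun u hu => ?_) (fun x hx => ?_)
        · simpa using (mem_erase.1 hu).2
        · obtain ⟨k, -, rfl⟩ := mem_image.1 hx
          exact (h k).2
      · have h2 := bad_wt hα hsum hp0 hp1 a0 ha0 ha i D (L - t) (univ.image b)
          ((univ.filter fun u => lab u = some i).erase a) (by
            have h3 := hL i
            have h4 := Finset.pred_card_le_card_erase (s := univ.filter fun u => lab u = some i) (a := a)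
            have h5 : L ≤ ((univ.filter fun u => lab u = some i).erase a).card + t := by omega
            have : (L : ℝ) ≤ ((univ.filter fun u => lab u = some i).erase a).card + t := by
              exact_mod_cast h5
            linarith)
        rw [wtE_sum_none hsum, mul_pow, mul_left_comm]
        rw [hcard] at h2 ⊢
        refine mul_le_mul (le_of_eq ?_) h2 ?_ (by positivity)
        · rw [card_product, hcard]; simp
        · refine mul_nonneg (by positivity) (pow_nonneg (Finset.sum_nonneg fun x _ => ?_) _)
          exact mul_nonneg (wtE_nonneg hα hp0 hp1 x) (by positivity)
    · have : PrG α p (fun f : Fin n × Fin n → Option (Fin q) => Function.Injective b ∧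
          ∀ k, trG f (a, b k) ≠ none ∧ bdV lab D f i (b k)) = 0 := by
        unfold PrG
        exact Finset.sum_eq_zero fun f _ => by simp [hb]
      exact this.le.trans (by positivity)
  refine (Finset.sum_le_card_nsmul _ _ _ hj).trans (le_of_eq ?_)
  simp only [card_univ, Fintype.card_prod, Fintype.card_fin, nsmul_eq_mul, Fintype.card_fun]
  push_cast
  ring

lemma ev3b (hα : ∀ i, 0 < α i) (hsum : ∑ i, α i = 1) (hp0 : 0 ≤ p) (hp1 : p ≤ 1)
    (a0 : ℝ) (ha0 : 0 ≤ a0) (ha : ∀ i, a0 ≤ α i) (lab : Fin n → Option (Fin q)) (D : ℝ) (L t : ℕ)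
    (hL : ∀ i, L ≤ (univ.filter fun u => lab u = some i).card) :
    PrG (n := n) α p (fun f => ∃ (i : Fin q) (a : Fin n) (b a' : Fin t → Fin n),
      Function.Injective b ∧ Function.Injective a' ∧ (∀ j, a' j ≠ a) ∧
      ∀ j, f (a, b j) ≠ none ∧ f (a' j, b j) ≠ none ∧ bdV lab D f i (a' j)) ≤
      q * n * n ^ t * n ^ t * (p ^ 2 * Real.exp (D - a0 * p * (L - t) / 2)) ^ t := by
  classical
  refine (PrG_union hα hp0 hp1 (univ : Finset (Fin q × Fin n × (Fin t → Fin n) × (Fin t → Fin n))) _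
    (fun j f => (Function.Injective j.2.2.1 ∧ Function.Injective j.2.2.2 ∧
      (∀ k, j.2.2.2 k ≠ j.2.1)) ∧ ∀ k, f (j.2.1, j.2.2.1 k) ≠ none ∧
      f (j.2.2.2 k, j.2.2.1 k) ≠ none ∧ bdV lab D f j.1 (j.2.2.2 k)) ?_).trans ?_
  · rintro f ⟨i, a, b, a', hb, ha', hne, h⟩
    exact ⟨(i, a, b, a'), mem_univ _, ⟨hb, ha', hne⟩, h⟩
  have hj : ∀ j ∈ (univ : Finset (Fin q × Fin n × (Fin t → Fin n) × (Fin t → Fin n))), PrG α p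
      (fun f => (Function.Injective j.2.2.1 ∧ Function.Injective j.2.2.2 ∧
      (∀ k, j.2.2.2 k ≠ j.2.1)) ∧ ∀ k, f (j.2.1, j.2.2.1 k) ≠ none ∧
      f (j.2.2.2 k, j.2.2.1 k) ≠ none ∧ bdV lab D f j.1 (j.2.2.2 k)) ≤
      (p ^ 2 * Real.exp (D - a0 * p * (L - t) / 2)) ^ t := by
    rintro ⟨i, a, b, a'⟩ -
    by_cases hb : Function.Injective b ∧ Function.Injective a' ∧ (∀ k, a' k ≠ a)
    · obtain ⟨hb, ha', hne⟩ := hb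
      have hcard : (univ.image b).card = t := by
        rw [card_image_of_injective _ hb]; simp
      have hcard' : (univ.image a').card = t := by
        rw [card_image_of_injective _ ha']; simp
      set F1 : Finset (Fin n × Fin n) := (univ.image fun k => (a, b k)) ∪
        (univ.image fun k => (a' k, b k)) with hF1
      have hF1c : F1.card = 2 * t := by
        rw [hF1, card_union_of_disjoint, card_image_of_injective, card_image_of_injective]
        · simp; ring
        · intro k k' h; exact ha' (by simpa using (Prod.ext_iff.1 h).1)
        · intro k k' h; exact hb (by simpa using (Prod.ext_iff.1 h).2)
        · rw [Finset.disjoint_left]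
          intro e h1 h2
          obtain ⟨k, -, rfl⟩ := mem_image.1 h1
          obtain ⟨k', -, h3⟩ := mem_image.1 h2
          exact hne k' (Prod.ext_iff.1 h3).1
      refine (PrG_cyl hα hsum hp0 hp1 _ F1
        (univ.image a' ×ˢ ((univ.filter fun u => lab u = some i) \ univ.image b))
        ?_ (fun x => if x = none then 0 else 1)
        (fun x => if x = some i then Real.exp (-1) else 1) (fun x => by positivity)
        (fun x => by positivity) (Real.exp (D * (univ.image a').card)) (by positivity) ?_).trans ?_
      · rw [Finset.disjoint_left]
        intro e h1 h2
        have h3 := (mem_sdiff.1 (mem_product.1 h2).2).2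
        rcases mem_union.1 h1 with h | h <;> obtain ⟨k, -, rfl⟩ := mem_image.1 h <;>
          exact h3 (mem_image_of_mem _ (mem_univ k))
      · rintro f ⟨-, h⟩
        have h1 : ∏ e ∈ F1, (if f e = none then (0 : ℝ) else 1) = 1 := by
          refine Finset.prod_eq_one ?_
          intro e he
          rcases mem_union.1 he with h' | h' <;> obtain ⟨k, -, rfl⟩ := mem_image.1 h'
          · exact if_neg (h k).1
          · exact if_neg (h k).2.1
        rw [h1, one_mul]
        refine bad_chern lab D f i _ _ (fun u hu => ?_) (fun x hx => ?_)
        · simpa using (mem_sdiff.1 hu).1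
        · obtain ⟨k, -, rfl⟩ := mem_image.1 hx
          exact (h k).2.2
      · have h2 := bad_wt hα hsum hp0 hp1 a0 ha0 ha i D (L - t) (univ.image a')
          ((univ.filter fun u => lab u = some i) \ univ.image b) (by
            have h3 := hL i
            have h4 := Finset.le_card_sdiff (univ.image b) (univ.filter fun u => lab u = some i)
            rw [hcard] at h4
            have h5 : L ≤ ((univ.filter fun u => lab u = some i) \ univ.image b).card + t := by omega
            have : (L : ℝ) ≤ ((univ.filter fun u => lab u = some i) \ univ.image b).card + t := by
              exact_mod_cast h5
            linarith)
        rw [wtE_sum_none hsum, mul_pow, mul_left_comm]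
        rw [hcard'] at h2 ⊢
        refine mul_le_mul (le_of_eq ?_) h2 ?_ (by positivity)
        · rw [hF1c, pow_mul]; simp
        · refine mul_nonneg (by positivity) (pow_nonneg (Finset.sum_nonneg fun x _ => ?_) _)
          exact mul_nonneg (wtE_nonneg hα hp0 hp1 x) (by positivity)
    · have : PrG α p (fun f : Fin n × Fin n → Option (Fin q) => (Function.Injective b ∧
          Function.Injective a' ∧ (∀ k, a' k ≠ a)) ∧ ∀ k, f (a, b k) ≠ none ∧
          f (a' k, b k) ≠ none ∧ bdV lab D f i (a' k)) = 0 := by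
        unfold PrG
        exact Finset.sum_eq_zero fun f _ => by rw [if_neg (fun h => hb h.1), mul_zero]
      exact this.le.trans (by positivity)
  refine (Finset.sum_le_card_nsmul _ _ _ hj).trans (le_of_eq ?_)
  simp only [card_univ, Fintype.card_prod, Fintype.card_fin, nsmul_eq_mul, Fintype.card_fun]
  push_cast
  ring

lemma ev4 (hα : ∀ i, 0 < α i) (hsum : ∑ i, α i = 1) (hp0 : 0 ≤ p) (hp1 : p ≤ 1)
    (a0 : ℝ) (ha0 : 0 ≤ a0) (ha : ∀ i, a0 ≤ α i) (lab : Fin n → Option (Fin q)) (D : ℝ) (L t : ℕ)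
    (hL : ∀ i, L ≤ (univ.filter fun u => lab u = some i).card) (X : ℝ) (hX : 0 < X) :
    PrG (n := n) α p (fun f => ∃ N : Finset (Fin n), X ≤ N.card ∧ ∀ a ∈ N, ∃ i, bdV lab D f i a) ≤
      n * (q * Real.exp (D - a0 * p * (L - t) / 2)) / X := by
  classical
  refine (PrG_markov hα hp0 hp1 (univ : Finset (Fin n)) _ X hX
    (fun a f => ∃ i, bdV lab D f i a) ?_).trans ?_
  · rintro f ⟨N, h1, h2⟩
    exact ⟨N, subset_univ _, h1, h2⟩
  refine div_le_div_of_nonneg_right ?_ hX.le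
  have hj : ∀ a ∈ (univ : Finset (Fin n)), PrG α p (fun f => ∃ i, bdV lab D f i a) ≤
      q * Real.exp (D - a0 * p * (L - t) / 2) := by
    intro a _
    refine (PrG_union hα hp0 hp1 (univ : Finset (Fin q)) _ (fun i f => bdV lab D f i a)
      (fun f ⟨i, h⟩ => ⟨i, mem_univ _, h⟩)).trans ?_
    have hi : ∀ i ∈ (univ : Finset (Fin q)), PrG α p (fun f => bdV lab D f i a) ≤
        Real.exp (D - a0 * p * (L - t) / 2) := by
      intro i _
      refine (PrG_cyl hα hsum hp0 hp1 _ ∅ ({a} ×ˢ (univ.filter fun u => lab u = some i))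
        (by simp) (fun _ => 1) (fun x => if x = some i then Real.exp (-1) else 1)
        (fun x => by positivity) (fun x => by positivity)
        (Real.exp (D * ({a} : Finset (Fin n)).card)) (by positivity) ?_).trans ?_
      · intro f h
        rw [prod_empty, one_mul]
        exact bad_chern lab D f i _ _ (fun u hu => by simpa using hu) (fun x hx => by
          rw [mem_singleton] at hx; rw [hx]; exact h)
      · rw [card_empty, pow_zero, one_mul]
        refine (bad_wt hα hsum hp0 hp1 a0 ha0 ha i D (L - t) _ _ ?_).trans (by simp)
        have : (L : ℝ) ≤ (univ.filter fun u => lab u = some i).card := by exact_mod_cast hL i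
        have : (0 : ℝ) ≤ t := by positivity
        linarith
    refine (Finset.sum_le_card_nsmul _ _ _ hi).trans (le_of_eq ?_)
    simp
  refine (Finset.sum_le_card_nsmul _ _ _ hj).trans (le_of_eq ?_)
  simp

end events2

section events3
variable {n q : ℕ} {α : Fin q → ℝ} {p : ℝ}

lemma ev5_term (hα : ∀ i, 0 < α i) (hsum : ∑ i, α i = 1) (hp0 : 0 < p) (hp1 : p ≤ 1)
    (r : ℕ) (S T : Finset (Fin n)) (hS : S.card = r + 1) (hT : T.card = r) :
    PrG (n := n) α p (fun f => (∀ e ∈ S ×ˢ Tᶜ, f e = none) ∧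
      2 * T.card ≤ ((S ×ˢ T).filter fun e => f e ≠ none).card) ≤
      (Real.exp 1 * (p * (r + 1)) ^ 2) ^ r * Real.exp (-(p * (r + 1) * (n - r))) := by
  classical
  have hd : Disjoint (S ×ˢ T) (S ×ˢ Tᶜ) := by
    rw [Finset.disjoint_left]
    intro e h1 h2
    exact (mem_compl.1 (mem_product.1 h2).2) (mem_product.1 h1).2
  have hrn : r ≤ n := by simpa [hT] using card_le_univ T
  have hnone : ∀ f : Fin n × Fin n → Option (Fin q), (∀ e ∈ S ×ˢ Tᶜ, f e = none) →
      ∏ e ∈ S ×ˢ Tᶜ, (if f e = none then (1 : ℝ) else 0) = 1 := fun f h => prod_ite_one _ _ h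
  have hw : (∑ x, wtE α p x * (if x = none then (1 : ℝ) else 0)) ^ (S ×ˢ Tᶜ).card ≤
      Real.exp (-(p * (r + 1) * (n - r))) := by
    rw [wtE_sum_none hsum, card_product, card_compl, hS, hT, Fintype.card_fin]
    calc ((1 - p) * 1 + p * 0) ^ ((r + 1) * (n - r)) ≤ (Real.exp (-p)) ^ ((r + 1) * (n - r)) := by
          refine pow_le_pow_left₀ (by linarith) ?_ _
          have := Real.add_one_le_exp (-p); linarith
      _ = _ := by
          rw [← Real.exp_nat_mul]; push_cast [Nat.cast_sub hrn]; ring_nf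
  have hw0 : 0 ≤ (∑ x, wtE α p x * (if x = none then (1 : ℝ) else 0)) ^ (S ×ˢ Tᶜ).card := by
    rw [wtE_sum_none hsum]
    exact pow_nonneg (by linarith) _
  have hr1 : (0 : ℝ) < r + 1 := by positivity
  by_cases hps : p * (r + 1) ≤ 1
  · set y : ℝ := (p * (r + 1))⁻¹ with hy
    have hy1 : 1 ≤ y := (one_le_inv₀ (by positivity)).2 hps
    refine (PrG_cyl hα hsum hp0.le hp1 _ (S ×ˢ T) (S ×ˢ Tᶜ) hd
      (fun x => if x = none then 1 else y) (fun x => if x = none then 1 else 0)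
      (fun x => by positivity) (fun x => by positivity) ((y ^ (2 * r))⁻¹) (by positivity) ?_).trans ?_
    · rintro f ⟨h1, h2⟩
      rw [hnone f h1, mul_one]
      have : ∀ e ∈ S ×ˢ T, (if f e = none then (1 : ℝ) else y) =
        if f e ≠ none then y else 1 := fun e _ => by split_ifs <;> simp_all
      rw [Finset.prod_congr rfl this, prod_ite_count, inv_mul_eq_div, one_le_div (by positivity)]
      rw [hT] at h2
      exact pow_le_pow_right₀ hy1 h2
    · rw [← mul_assoc]
      refine mul_le_mul ?_ hw hw0 (by positivity)
      rw [wtE_sum_none hsum, card_product, hS, hT]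
      have h3 : (1 - p) * 1 + p * y ≤ Real.exp (p * y) := by
        have := Real.add_one_le_exp (p * y); linarith
      calc (y ^ (2 * r))⁻¹ * ((1 - p) * 1 + p * y) ^ ((r + 1) * r)
          ≤ (y ^ (2 * r))⁻¹ * Real.exp (p * y) ^ ((r + 1) * r) := by
            gcongr
        _ = _ := by
            rw [← Real.exp_nat_mul, hy, inv_pow, inv_inv, mul_pow (Real.exp 1), ← Real.exp_nat_mul,
              pow_mul, mul_comm]
            congr 2
            push_cast
            field_simp
  · push Not at hps
    refine (PrG_cyl hα hsum hp0.le hp1 _ ∅ (S ×ˢ Tᶜ) (by simp)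
      (fun x => 1) (fun x => if x = none then 1 else 0)
      (fun x => by positivity) (fun x => by positivity) 1 (by positivity) ?_).trans ?_
    · rintro f ⟨h1, h2⟩
      rw [hnone f h1]; simp
    · rw [card_empty, pow_zero, one_mul, one_mul]
      refine hw.trans (le_mul_of_one_le_left (by positivity) (one_le_pow₀ ?_))
      have h1 : 1 ≤ Real.exp 1 := Real.one_le_exp (by norm_num)
      have h2 : 1 ≤ (p * (r + 1)) ^ 2 := one_le_pow₀ hps.le
      nlinarith

lemma choose_mul_pow (n k : ℕ) (x : ℝ) (hx : 0 ≤ x) :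
    (n.choose k : ℝ) * x ^ k ≤ n ^ k * Real.exp x := by
  have h1 : (n.choose k : ℝ) ≤ n ^ k / k.factorial := Nat.choose_le_pow_div k n
  have h2 := Real.pow_div_factorial_le_exp x hx k
  calc (n.choose k : ℝ) * x ^ k ≤ n ^ k / k.factorial * x ^ k := by gcongr
    _ = n ^ k * (x ^ k / k.factorial) := by ring
    _ ≤ _ := by gcongr

lemma ev5_num (n r : ℕ) (p N : ℝ) (hp0 : 0 < p) (hn : (n : ℝ) = Real.exp N)
    (h1 : N ≤ p * n) (h2 : p * n ≤ 2 * N) (hN : 1 ≤ 2 * N) (hr : 1 ≤ r)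
    (hrn : ((r : ℝ) + 1) ≤ n / 8) :
    ((n.choose (r + 1) : ℝ) * n.choose r) * ((Real.exp 1 * (p * (r + 1)) ^ 2) ^ r *
      Real.exp (-(p * (r + 1) * (n - r)))) ≤
      (Real.exp 3 * (2 * N) ^ 2 * Real.exp (-(3 / 8 * N))) ^ (r + 1) := by
  have hr' : (1 : ℝ) ≤ r := by exact_mod_cast hr
  have hn0 : (0 : ℝ) ≤ n := by positivity
  have e1 : (n.choose (r + 1) : ℝ) * ((r : ℝ) + 1) ^ r ≤ n ^ (r + 1) * Real.exp (r + 1) := by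
    refine le_trans ?_ (choose_mul_pow n (r + 1) (r + 1) (by positivity))
    refine mul_le_mul_of_nonneg_left ?_ (by positivity)
    exact pow_le_pow_right₀ (by linarith) (by omega)
  have e2 := choose_mul_pow n r ((r : ℝ) + 1) (by positivity)
  have e3 : Real.exp (-(p * (r + 1) * (n - r))) ≤ Real.exp (-(7 / 8 * N * (r + 1))) := by
    rw [Real.exp_le_exp, neg_le_neg_iff]
    have h3 : 7 / 8 * (n : ℝ) ≤ n - r := by linarith
    calc 7 / 8 * N * (r + 1) ≤ 7 / 8 * (p * n) * (r + 1) := by gcongr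
      _ = p * (r + 1) * (7 / 8 * n) := by ring
      _ ≤ _ := by gcongr
  have e4 : (n : ℝ) ≤ Real.exp (N / 2 * (r + 1)) := by
    rw [hn, Real.exp_le_exp]; nlinarith
  calc ((n.choose (r + 1) : ℝ) * n.choose r) * ((Real.exp 1 * (p * (r + 1)) ^ 2) ^ r *
      Real.exp (-(p * (r + 1) * (n - r))))
      = ((n.choose (r + 1) : ℝ) * ((r : ℝ) + 1) ^ r) * (n.choose r * ((r : ℝ) + 1) ^ r) *
        (Real.exp 1 ^ r * (p ^ 2) ^ r) * Real.exp (-(p * (r + 1) * (n - r))) := by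
        generalize (r : ℝ) + 1 = z
        rw [mul_pow, mul_pow p, mul_pow (p ^ 2)]; ring
    _ ≤ (n ^ (r + 1) * Real.exp (r + 1)) * (n ^ r * Real.exp (r + 1)) *
        (Real.exp 1 ^ r * (p ^ 2) ^ r) * Real.exp (-(7 / 8 * N * (r + 1))) := by gcongr
    _ = n * ((p * n) ^ 2) ^ r * (Real.exp 1 ^ r * Real.exp (r + 1) * Real.exp (r + 1)) *
        Real.exp (-(7 / 8 * N * (r + 1))) := by
        rw [mul_pow p, mul_pow (p ^ 2)]; ring
    _ ≤ Real.exp (N / 2 * (r + 1)) * ((2 * N) ^ 2) ^ (r + 1) * Real.exp 3 ^ (r + 1) *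
        Real.exp (-(7 / 8 * N * (r + 1))) := by
        gcongr ?_ * ?_ * ?_ * _
        · calc ((p * n) ^ 2) ^ r ≤ ((2 * N) ^ 2) ^ r := by gcongr
            _ ≤ _ := pow_le_pow_right₀ (one_le_pow₀ hN) (by omega)
        · rw [← Real.exp_nat_mul, ← Real.exp_nat_mul, ← Real.exp_add, ← Real.exp_add,
            Real.exp_le_exp]
          push_cast; linarith
    _ = _ := by
        have : Real.exp (N / 2 * (r + 1)) * Real.exp (-(7 / 8 * N * (r + 1))) =
            Real.exp (-(3 / 8 * N)) ^ (r + 1) := by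
          rw [← Real.exp_add, ← Real.exp_nat_mul]; push_cast; ring_nf
        rw [mul_pow (Real.exp 3 * _), mul_pow (Real.exp 3), ← this]; ring

lemma ev5 (hα : ∀ i, 0 < α i) (hsum : ∑ i, α i = 1) (hp0 : 0 < p) (hp1 : p ≤ 1) (N K x : ℝ)
    (hn : (n : ℝ) = Real.exp N)
    (h1 : N ≤ p * n) (h2 : p * n ≤ 2 * N) (hN : 1 ≤ 2 * N) (hK : K ≤ n / 8)
    (hx : x = Real.exp 3 * (2 * N) ^ 2 * Real.exp (-(3 / 8 * N))) (hx1 : x ≤ 1 / 2) :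
    PrG (n := n) α p (fun f => ∃ S T : Finset (Fin n), (S.card : ℝ) ≤ K ∧ T.card + 1 = S.card ∧
      (∀ e ∈ S ×ˢ Tᶜ, f e = none) ∧
      2 * T.card ≤ ((S ×ˢ T).filter fun e => f e ≠ none).card) ≤
      n * Real.exp (-(p * n)) + 2 * x := by
  classical
  have hx0 : 0 ≤ x := by rw [hx]; positivity
  refine (PrG_union hα hp0.le hp1 (range ⌊K⌋₊) _
    (fun r f => ∃ S T : Finset (Fin n), S.card = r + 1 ∧ T.card = r ∧
      (∀ e ∈ S ×ˢ Tᶜ, f e = none) ∧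
      2 * T.card ≤ ((S ×ˢ T).filter fun e => f e ≠ none).card) ?_).trans ?_
  · rintro f ⟨S, T, h1, h2, h3⟩
    refine ⟨T.card, ?_, S, T, h2.symm, rfl, h3⟩
    have := Nat.le_floor h1
    rw [mem_range]; omega
  have hterm : ∀ r ∈ range ⌊K⌋₊, PrG (n := n) α p
      (fun f => ∃ S T : Finset (Fin n), S.card = r + 1 ∧ T.card = r ∧
      (∀ e ∈ S ×ˢ Tᶜ, f e = none) ∧
      2 * T.card ≤ ((S ×ˢ T).filter fun e => f e ≠ none).card) ≤
      (if r = 0 then n * Real.exp (-(p * n)) else 0) + x * (1 / 2) ^ r := by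
    intro r hr
    have hb : PrG (n := n) α p
      (fun f => ∃ S T : Finset (Fin n), S.card = r + 1 ∧ T.card = r ∧
      (∀ e ∈ S ×ˢ Tᶜ, f e = none) ∧
      2 * T.card ≤ ((S ×ˢ T).filter fun e => f e ≠ none).card) ≤
      ((n.choose (r + 1) : ℝ) * n.choose r) * ((Real.exp 1 * (p * (r + 1)) ^ 2) ^ r *
      Real.exp (-(p * (r + 1) * (n - r)))) := by
      refine (PrG_union hα hp0.le hp1 (powersetCard (r + 1) univ ×ˢ powersetCard r univ) _
        (fun j f => (∀ e ∈ j.1 ×ˢ j.2ᶜ, f e = none) ∧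
          2 * j.2.card ≤ ((j.1 ×ˢ j.2).filter fun e => f e ≠ none).card) ?_).trans ?_
      · rintro f ⟨S, T, hS, hT, h⟩
        exact ⟨(S, T), by simp [hS, hT], h⟩
      · refine (Finset.sum_le_card_nsmul _ _ _ (fun j hj => ev5_term hα hsum hp0 hp1 r j.1 j.2
          ?_ ?_)).trans (le_of_eq ?_)
        · simpa using (mem_powersetCard.1 (mem_product.1 hj).1).2
        · simpa using (mem_powersetCard.1 (mem_product.1 hj).2).2
        · rw [nsmul_eq_mul, card_product, card_powersetCard, card_powersetCard, card_univ,
            Fintype.card_fin]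
          push_cast; ring
    refine hb.trans ?_
    rcases Nat.eq_zero_or_pos r with rfl | hr0
    · simp
      linarith
    · rw [if_neg (by omega), zero_add]
      have hrK : ((r : ℝ) + 1) ≤ n / 8 := by
        refine le_trans ?_ hK
        have h3 : r + 1 ≤ ⌊K⌋₊ := by rw [mem_range] at hr; omega
        have h4 := (Nat.le_floor_iff' (by omega)).1 h3
        exact_mod_cast h4
      refine (ev5_num n r p N hp0 hn h1 h2 hN hr0 hrK).trans ?_
      rw [← hx, pow_succ, mul_comm]
      gcongr
  refine (Finset.sum_le_sum hterm).trans ?_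
  rw [Finset.sum_add_distrib, ← Finset.mul_sum]
  have h3 := sum_geometric_two_le ⌊K⌋₊
  have h4 : ∑ r ∈ range ⌊K⌋₊, (if r = 0 then (n : ℝ) * Real.exp (-(p * n)) else 0) ≤
      n * Real.exp (-(p * n)) := by
    rw [Finset.sum_ite_eq' (range ⌊K⌋₊) 0]
    split_ifs
    · exact le_rfl
    · positivity
  nlinarith

end events3

section combine
variable {n q : ℕ} {α : Fin q → ℝ} {p : ℝ}

lemma PrG_or (hα : ∀ i, 0 < α i) (hp0 : 0 ≤ p) (hp1 : p ≤ 1)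
    (E E1 E2 : (Fin n × Fin n → Option (Fin q)) → Prop) (h : ∀ f, E f → E1 f ∨ E2 f)
    {x y : ℝ} (hx : PrG α p E1 ≤ x) (hy : PrG α p E2 ≤ y) :
    PrG α p E ≤ x + y := by
  have := PrG_union hα hp0 hp1 (univ : Finset Bool) E (fun b => if b then E1 else E2) (by
    intro f hf
    rcases h f hf with h | h
    · exact ⟨true, mem_univ _, by simpa using h⟩
    · exact ⟨false, mem_univ _, by simpa using h⟩)
  simp only [Fintype.sum_bool, if_true, Bool.false_eq_true, if_false] at this
  linarith

lemma pr_half (hα : ∀ i, 0 < α i) (hsum : ∑ i, α i = 1) (hp0 : 0 < p) (hp1 : p ≤ 1)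
    (a0 : ℝ) (ha0 : 0 < a0) (ha : ∀ i, a0 ≤ α i) (lab : Fin n → Option (Fin q)) (L t : ℕ)
    (ht1 : 1 ≤ t) (hL : ∀ i, (univ.filter fun u => lab u = some i).card = L)
    (β κ N δ w : ℝ) (hβ : 0 < β) (hκ : κ = a0 * β / 16) (hδ0 : 0 < δ) (hδ1 : δ ≤ 1 / 8)
    (hδ2 : δ ≤ Real.exp (-(10 / κ)) / 2) (hn : (n : ℝ) = Real.exp N)
    (hpn : p * n = N + w) (hw0 : 0 ≤ w) (hwN : w ≤ N) (hN : 1 ≤ 2 * N) (hq : 1 ≤ q)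
    (ht : 2 ≤ κ * t) (hLt : β * n / 4 ≤ (L : ℝ) - t)
    (hx1 : Real.exp 3 * (2 * N) ^ 2 * Real.exp (-(3 / 8 * N)) ≤ 1 / 2)
    (hcN : Real.log 4 + 1 ≤ a0 * (δ / q) ^ 2 * N) :
    PrG (n := n) α p (fun f => ¬ HalfG lab (δ * n) (δ * n / q) (κ * N) (κ * N / 2) (β * n / 4) t f) ≤
      q * Real.exp (-n) + ((Real.exp (Real.exp (-N)) - 1) * Real.exp (Real.exp (-N)) +
      (q * ((2 * N) ^ t * Real.exp (-N)) + (q * ((2 * N) ^ (2 * t) * Real.exp (-N)) +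
      (4 * q / β * Real.exp (-(κ * N)) + (Real.exp (-w) +
        2 * (Real.exp 3 * (2 * N) ^ 2 * Real.exp (-(3 / 8 * N)))))))) := by
  have hκ0 : 0 < κ := by rw [hκ]; positivity
  have hn0 : (0 : ℝ) < n := by rw [hn]; positivity
  have hq0 : (0 : ℝ) < q := by exact_mod_cast hq
  have hN0 : 0 < N := by linarith
  have hpN : N ≤ p * n := by linarith
  have hp2N : p * n ≤ 2 * N := by linarith
  have hΘ : Real.exp (κ * N - a0 * p * (L - t) / 2) ≤ Real.exp (-(κ * N)) := by
    rw [Real.exp_le_exp]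
    have h1 : a0 * p * (β * n / 4) ≤ a0 * p * (L - t) := by gcongr
    have h2 : a0 * β * N ≤ a0 * β * (p * n) := by gcongr
    have h3 : a0 * β = 16 * κ := by rw [hκ]; ring
    rw [h3] at h2
    have h4 : a0 * p * (β * n / 4) = 16 * κ * (p * n) / 4 := by rw [← h3]; ring
    linarith
  have hΘt : Real.exp (κ * N - a0 * p * (L - t) / 2) ^ t ≤ Real.exp (-(2 * N)) := by
    calc _ ≤ Real.exp (-(κ * N)) ^ t := by gcongr
      _ ≤ _ := by
        rw [← Real.exp_nat_mul, Real.exp_le_exp]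
        nlinarith
  have hnn : (n : ℝ) * Real.exp (-(2 * N)) = Real.exp (-N) := by
    rw [hn, ← Real.exp_add]; ring_nf
  have hLle : ∀ i, L ≤ (univ.filter fun u => lab u = some i).card := fun i => (hL i).ge
  have b1 : PrG (n := n) α p (fun f => ∃ i : Fin q, ∃ S T : Finset (Fin n),
      (δ * n / q) ≤ S.card ∧ (δ * n / q) ≤ T.card ∧
      ∀ e ∈ S ×ˢ T, f e ≠ some i) ≤ q * Real.exp (-n) := by
    refine (ev1 hα hsum hp0.le hp1 a0 ha0.le ha (δ * n / q) (by positivity)).trans ?_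
    rw [mul_assoc]
    refine mul_le_mul_of_nonneg_left ?_ hq0.le
    have h4 : (4 : ℝ) ^ n = Real.exp (n * Real.log 4) := by
      rw [Real.exp_nat_mul, Real.exp_log (by norm_num)]
    rw [h4, ← Real.exp_add, Real.exp_le_exp]
    have h5 : a0 * p * (δ * n / q) ^ 2 = a0 * (δ / q) ^ 2 * (p * n) * n := by ring
    have h6 : a0 * (δ / q) ^ 2 * N * n ≤ a0 * (δ / q) ^ 2 * (p * n) * n := by gcongr
    have h7 := mul_le_mul_of_nonneg_right hcN hn0.le
    rw [h5]
    linarith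
  have b2 : PrG (n := n) α p (fun f => ∃ S T : Finset (Fin n), S.Nonempty ∧ T.card ≤ S.card ∧
      (S.card : ℝ) ≤ δ * n ∧ κ * N / 2 * S.card ≤ ((S ×ˢ T).filter fun e => f e ≠ none).card) ≤
      (Real.exp (Real.exp (-N)) - 1) * Real.exp (Real.exp (-N)) := by
    refine (ev2 hα hsum hp0.le hp1 (10 / κ) (κ * N / 2) (δ * n) N (by positivity) hN0.le ?_ ?_).trans ?_
    · have h3 : Real.exp (10 / κ) * δ ≤ 1 / 2 := by
        calc Real.exp (10 / κ) * δ ≤ Real.exp (10 / κ) * (Real.exp (-(10 / κ)) / 2) := by gcongr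
          _ = 1 / 2 := by rw [← mul_div_assoc, ← Real.exp_add]; simp
      calc p * Real.exp (10 / κ) * (δ * n) = (p * n) * (Real.exp (10 / κ) * δ) := by ring
        _ ≤ (2 * N) * (1 / 2) := by gcongr
        _ = N := by ring
    · field_simp; ring
    · have h3 : (1 + Real.exp (-2 * N)) ^ n ≤ Real.exp (Real.exp (-N)) := by
        calc (1 + Real.exp (-2 * N)) ^ n ≤ Real.exp (Real.exp (-2 * N)) ^ n := by
              gcongr
              have := Real.add_one_le_exp (Real.exp (-2 * N)); linarith
          _ = _ := by
              rw [← Real.exp_nat_mul, ← hnn]; ring_nf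
      have h4 : 1 ≤ (1 + Real.exp (-2 * N)) ^ n :=
        one_le_pow₀ (by have := Real.exp_pos (-2 * N); linarith)
      exact mul_le_mul (by linarith) h3 (by linarith) (by linarith)
  have b3a : PrG (n := n) α p (fun f => ∃ (i : Fin q) (a : Fin n) (b : Fin t → Fin n),
      Function.Injective b ∧ ∀ j, f (a, b j) ≠ none ∧ bdV lab (κ * N) (trG f) i (b j)) ≤
      q * ((2 * N) ^ t * Real.exp (-N)) := by
    have h3 := ev3a hα hsum hp0.le hp1 a0 ha0.le ha lab (κ * N) L t ht1 hLle
    rw [← PrG_tr] at h3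
    refine le_trans h3 ?_
    calc q * n * n ^ t * (p * Real.exp (κ * N - a0 * p * (L - t) / 2)) ^ t
        = q * n * ((p * n) ^ t * Real.exp (κ * N - a0 * p * (L - t) / 2) ^ t) := by
          rw [mul_pow, mul_pow p]; ring
      _ ≤ q * n * ((2 * N) ^ t * Real.exp (-(2 * N))) := by gcongr
      _ = _ := by rw [← hnn]; ring
  have b3b : PrG (n := n) α p (fun f => ∃ (i : Fin q) (a : Fin n) (b a' : Fin t → Fin n),
      Function.Injective b ∧ Function.Injective a' ∧ (∀ j, a' j ≠ a) ∧
      ∀ j, f (a, b j) ≠ none ∧ f (a' j, b j) ≠ none ∧ bdV lab (κ * N) f i (a' j)) ≤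
      q * ((2 * N) ^ (2 * t) * Real.exp (-N)) := by
    refine (ev3b hα hsum hp0.le hp1 a0 ha0.le ha lab (κ * N) L t hLle).trans ?_
    calc q * n * n ^ t * n ^ t * (p ^ 2 * Real.exp (κ * N - a0 * p * (L - t) / 2)) ^ t
        = q * n * ((p * n) ^ (2 * t) * Real.exp (κ * N - a0 * p * (L - t) / 2) ^ t) := by
          rw [mul_pow, mul_pow p]; ring
      _ ≤ q * n * ((2 * N) ^ (2 * t) * Real.exp (-(2 * N))) := by gcongr
      _ = _ := by rw [← hnn]; ring
  have b4 : PrG (n := n) α p (fun f => ∃ M : Finset (Fin n), (β * n / 4) ≤ M.card ∧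
      ∀ a ∈ M, ∃ i, bdV lab (κ * N) f i a) ≤ 4 * q / β * Real.exp (-(κ * N)) := by
    refine (ev4 hα hsum hp0.le hp1 a0 ha0.le ha lab (κ * N) L t hLle (β * n / 4)
      (by positivity)).trans ?_
    calc n * (q * Real.exp (κ * N - a0 * p * (L - t) / 2)) / (β * n / 4)
        ≤ n * (q * Real.exp (-(κ * N))) / (β * n / 4) := by gcongr
      _ = _ := by field_simp
  have b5 : PrG (n := n) α p (fun f => ∃ S T : Finset (Fin n), (S.card : ℝ) ≤ δ * n ∧
      T.card + 1 = S.card ∧ (∀ e ∈ S ×ˢ Tᶜ, f e = none) ∧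
      2 * T.card ≤ ((S ×ˢ T).filter fun e => f e ≠ none).card) ≤
      Real.exp (-w) + 2 * (Real.exp 3 * (2 * N) ^ 2 * Real.exp (-(3 / 8 * N))) := by
    refine (ev5 hα hsum hp0 hp1 N (δ * n) _ hn hpN hp2N hN (by nlinarith) rfl hx1).trans (le_of_eq ?_)
    rw [hpn, hn, ← Real.exp_add]
    ring_nf
  refine PrG_or hα hp0.le hp1 _ _ _ ?_ b1 <| PrG_or hα hp0.le hp1 _ _ _ (fun f h => h) b2 <|
    PrG_or hα hp0.le hp1 _ _ _ (fun f h => h) b3a <| PrG_or hα hp0.le hp1 _ _ _ (fun f h => h) b3b <|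
    PrG_or hα hp0.le hp1 _ _ _ (fun f h => h) b4 b5
  intro f hf
  by_contra hcon
  simp only [not_or] at hcon
  obtain ⟨c1, c2, c3, c4, c5, c6⟩ := hcon
  refine hf ⟨?_, ?_, ?_, ?_, ?_, ?_⟩
  · intro i S T hS hT h; exact c1 ⟨i, S, T, hS, hT, h⟩
  · intro S T h1 h2 h3 h4; exact c2 ⟨S, T, h1, h2, h3, h4⟩
  · intro i a b h1 h2; exact c3 ⟨i, a, b, h1, h2⟩
  · intro i a b a' h1 h2 h3 h4; exact c4 ⟨i, a, b, a', h1, h2, h3, h4⟩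
  · intro M h1 h2; exact c5 ⟨M, h1, h2⟩
  · intro S T h1 h2 h3; exact c6 ⟨S, T, h1, h2, h3.1, h3.2⟩

end combine

lemma tends_pow_exp (k : ℕ) (c : ℝ) (hc : 0 < c) (N : ℕ → ℝ) (hN : Tendsto N atTop atTop) :
    Tendsto (fun n => (2 * N n) ^ k * Real.exp (-(c * N n))) atTop (nhds 0) := by
  have h1 : Tendsto (fun n => c * N n) atTop atTop := hN.const_mul_atTop hc
  have h2 := ((Real.tendsto_pow_mul_exp_neg_atTop_nhds_zero k).comp h1).const_mul ((2 / c) ^ k)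
  rw [mul_zero] at h2
  refine h2.congr fun n => ?_
  simp only [Function.comp]
  rw [← mul_assoc, ← mul_pow]
  congr 2
  field_simp

lemma tends_bound (q t : ℕ) (β κ : ℝ) (hκ : 0 < κ) (N w : ℕ → ℝ)
    (hN : Tendsto N atTop atTop) (hw : Tendsto w atTop atTop) :
    Tendsto (fun n : ℕ => q * Real.exp (-(n : ℝ)) +
      ((Real.exp (Real.exp (-N n)) - 1) * Real.exp (Real.exp (-N n)) +
      (q * ((2 * N n) ^ t * Real.exp (-N n)) + (q * ((2 * N n) ^ (2 * t) * Real.exp (-N n)) +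
      (4 * q / β * Real.exp (-(κ * N n)) + (Real.exp (-w n) +
        2 * (Real.exp 3 * (2 * N n) ^ 2 * Real.exp (-(3 / 8 * N n))))))))) atTop (nhds 0) := by
  have e0 : Tendsto (fun n : ℕ => Real.exp (-(n : ℝ))) atTop (nhds 0) :=
    Real.tendsto_exp_neg_atTop_nhds_zero.comp tendsto_natCast_atTop_atTop
  have e1 : Tendsto (fun n => Real.exp (-N n)) atTop (nhds 0) :=
    Real.tendsto_exp_neg_atTop_nhds_zero.comp hN
  have e2 : Tendsto (fun n => Real.exp (Real.exp (-N n))) atTop (nhds 1) := by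
    have := (Real.continuous_exp.tendsto 0).comp e1
    rwa [Real.exp_zero] at this
  have e3 (k : ℕ) : Tendsto (fun n => (2 * N n) ^ k * Real.exp (-N n)) atTop (nhds 0) := by
    simpa using tends_pow_exp k 1 one_pos N hN
  have e4 : Tendsto (fun n => Real.exp (-(κ * N n))) atTop (nhds 0) := by
    simpa using tends_pow_exp 0 κ hκ N hN
  have e5 : Tendsto (fun n => Real.exp (-w n)) atTop (nhds 0) :=
    Real.tendsto_exp_neg_atTop_nhds_zero.comp hw
  have e6 : Tendsto (fun n => Real.exp 3 * (2 * N n) ^ 2 * Real.exp (-(3 / 8 * N n)))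
      atTop (nhds 0) := by
    simpa [mul_assoc] using (tends_pow_exp 2 (3 / 8) (by norm_num) N hN).const_mul (Real.exp 3)
  have := (e0.const_mul (q : ℝ)).add (((e2.sub_const 1).mul e2).add (((e3 t).const_mul (q : ℝ)).add
    (((e3 (2 * t)).const_mul (q : ℝ)).add ((e4.const_mul (4 * q / β)).add
      (e5.add (e6.const_mul 2))))))
  simpa using this

lemma exists_lab (n q L : ℕ) (h : q * L ≤ n) : ∃ lab : Fin n → Option (Fin q),
    ∀ i, (univ.filter fun u => lab u = some i).card = L := by
  obtain ⟨c, hc⟩ := exists_fn_fibers (U := Fin n) (ι := Option (Fin q))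
    (fun o => if o = none then n - q * L else L) (by
      rw [Fintype.sum_option]; simp; omega)
  exact ⟨c, fun i => by simpa using hc (some i)⟩

/-- w.h.p. every vector `(m₁,…,m_q)` with `∑ mᵢ = n` and `mᵢ ≥ βn` lies in the
perfect matching color profile.  A perfect matching is encoded by a permutation `σ` with all
edges `(a, σ a)` present; `|M ∩ Qᵢ|` is the number of `a` with `f (a, σ a) = some i`. -/
theorem matching_color_profile (q : ℕ) (hq : 1 ≤ q) (α : Fin q → ℝ)
    (hα : ∀ i, 0 < α i) (hsum : ∑ i, α i = 1)
    (β : ℝ) (hβ : 0 < β) (hβq : β < 1 / q)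
    (w : ℕ → ℝ) (hw : Tendsto w atTop atTop)
    (hwo : w =o[atTop] fun n => Real.log n) :
    Tendsto (fun n =>
      graphM n q α ((Real.log n + w n) / n)
        {f | ∀ m : Fin q → ℕ, (∑ i, m i) = n → (∀ i, β * n ≤ (m i : ℝ)) →
          ∃ σ : Equiv.Perm (Fin n), (∀ a, f (a, σ a) ≠ none) ∧
            ∀ i, (univ.filter fun a => f (a, σ a) = some i).card = m i})
      atTop (nhds 1) := by
  have hq0 : (0 : ℝ) < q := by exact_mod_cast hq
  have : Nonempty (Fin q) := ⟨⟨0, hq⟩⟩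
  obtain ⟨i0, hi0⟩ := Finite.exists_min α
  obtain ⟨a0, ha0d⟩ : ∃ a0, a0 = α i0 := ⟨_, rfl⟩
  have ha0 : 0 < a0 := ha0d ▸ hα i0
  have ha : ∀ i, a0 ≤ α i := fun i => ha0d ▸ hi0 i
  obtain ⟨κ, hκ⟩ : ∃ κ, κ = a0 * β / 16 := ⟨_, rfl⟩
  have hκ0 : 0 < κ := by rw [hκ]; positivity
  obtain ⟨δ, hδ⟩ : ∃ δ, δ = min (1 / 8) (Real.exp (-(10 / κ)) / 2) := ⟨_, rfl⟩
  have hδ0 : 0 < δ := by rw [hδ]; exact lt_min (by norm_num) (by positivity)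
  have hδ1 : δ ≤ 1 / 8 := by rw [hδ]; exact min_le_left _ _
  have hδ2 : δ ≤ Real.exp (-(10 / κ)) / 2 := by rw [hδ]; exact min_le_right _ _
  obtain ⟨t, htd⟩ : ∃ t, t = ⌈2 / κ⌉₊ := ⟨_, rfl⟩
  have ht1 : 1 ≤ t := by rw [htd]; exact Nat.ceil_pos.2 (by positivity)
  have ht : 2 ≤ κ * t := by
    have : 2 / κ ≤ t := by rw [htd]; exact Nat.le_ceil _
    rwa [div_le_iff₀ hκ0, mul_comm] at this
  have hNt : Tendsto (fun n : ℕ => Real.log n) atTop atTop :=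
    Real.tendsto_log_atTop.comp tendsto_natCast_atTop_atTop
  have hnt : Tendsto (fun n : ℕ => (n : ℝ)) atTop atTop := tendsto_natCast_atTop_atTop
  have hB := tends_bound q t β κ hκ0 _ w hNt hw
  have hc0 : 0 < a0 * (δ / q) ^ 2 := by positivity
  have c1 := hw.eventually_ge_atTop 0
  have c2 := hwo.bound one_pos
  have c3 := hNt.eventually_ge_atTop 1
  have c4 : ∀ᶠ n : ℕ in atTop, 2 * Real.log n ≤ n := by
    have := (Real.isLittleO_log_id_atTop.comp_tendsto hnt).bound (c := 1 / 2) (by norm_num)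
    filter_upwards [this, c3] with n hn h3
    simp only [Function.comp, id, Real.norm_eq_abs] at hn
    rw [abs_of_nonneg (by linarith), abs_of_nonneg (Nat.cast_nonneg n)] at hn
    linarith
  have c5 : ∀ᶠ n : ℕ in atTop, (t : ℝ) + 1 ≤ β / 4 * n :=
    (hnt.const_mul_atTop (by positivity : 0 < β / 4)).eventually_ge_atTop _
  have c6 : ∀ᶠ n : ℕ in atTop, Real.exp 3 * (2 * Real.log n) ^ 2 *
      Real.exp (-(3 / 8 * Real.log n)) ≤ 1 / 2 := by
    have := (tends_pow_exp 2 (3 / 8) (by norm_num) _ hNt).const_mul (Real.exp 3)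
    rw [mul_zero] at this
    filter_upwards [this.eventually_le_const (u := 1 / 2) (by norm_num)] with n hn
    rwa [mul_assoc]
  have c7 := (hNt.const_mul_atTop hc0).eventually_ge_atTop (Real.log 4 + 1)
  have c8 := (hNt.const_mul_atTop (by positivity : 0 < κ / 2)).eventually_ge_atTop
    (2 * q * t : ℝ)
  have c9 := eventually_ge_atTop 1 (α := ℕ)
  have key : ∀ᶠ n : ℕ in atTop, ∃ P : ℝ, 0 ≤ P ∧ P ≤ 2 * (q * Real.exp (-(n : ℝ)) +
      ((Real.exp (Real.exp (-Real.log n)) - 1) * Real.exp (Real.exp (-Real.log n)) +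
      (q * ((2 * Real.log n) ^ t * Real.exp (-Real.log n)) +
      (q * ((2 * Real.log n) ^ (2 * t) * Real.exp (-Real.log n)) +
      (4 * q / β * Real.exp (-(κ * Real.log n)) + (Real.exp (-w n) +
        2 * (Real.exp 3 * (2 * Real.log n) ^ 2 * Real.exp (-(3 / 8 * Real.log n))))))))) ∧
      graphM n q α ((Real.log n + w n) / n)
        {f | ∀ m : Fin q → ℕ, (∑ i, m i) = n → (∀ i, β * n ≤ (m i : ℝ)) →
          ∃ σ : Equiv.Perm (Fin n), (∀ a, f (a, σ a) ≠ none) ∧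
            ∀ i, (univ.filter fun a => f (a, σ a) = some i).card = m i} =
        ENNReal.ofReal (1 - P) := by
    filter_upwards [c1, c2, c3, c4, c5, c6, c7, c8, c9] with n h1 h2 h3 h4 h5 h6 h7 h8 h9
    have hn0 : (0 : ℝ) < n := by exact_mod_cast h9
    have hwN : w n ≤ Real.log n := by
      rw [Real.norm_eq_abs, Real.norm_eq_abs, abs_of_nonneg h1, abs_of_nonneg (by linarith)] at h2
      linarith
    obtain ⟨p, hp⟩ : ∃ p, p = (Real.log n + w n) / n := ⟨_, rfl⟩
    rw [← hp]
    have hp0 : 0 < p := by rw [hp]; exact div_pos (by linarith) hn0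
    have hp1 : p ≤ 1 := by rw [hp, div_le_one hn0]; linarith
    have hpn : p * n = Real.log n + w n := by rw [hp]; field_simp
    obtain ⟨L, hLd⟩ : ∃ L, L = ⌊β * n / 2⌋₊ := ⟨_, rfl⟩
    have hLle : (L : ℝ) ≤ β * n / 2 := by rw [hLd]; exact Nat.floor_le (by positivity)
    have hLge : β * n / 2 < L + 1 := by rw [hLd]; exact Nat.lt_floor_add_one _
    have hqL : q * L ≤ n := by
      have h : (q : ℝ) * L ≤ n := by
        have hb : β * q < 1 := by rwa [lt_div_iff₀ hq0] at hβq
        have : (q : ℝ) * L ≤ q * (β * n / 2) := by gcongr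
        nlinarith
      exact_mod_cast h
    obtain ⟨lab, hlab⟩ := exists_lab n q L hqL
    have hhalf := pr_half (n := n) (p := p) hα hsum hp0 hp1 a0 ha0 ha lab L t ht1 hlab β κ
      (Real.log n) δ (w n) hβ hκ hδ0 hδ1 hδ2 (Real.exp_log hn0).symm hpn h1 hwN (by linarith) hq ht
      (by linarith) h6 h7
    have hhalf' := hhalf
    rw [← PrG_tr] at hhalf'
    refine ⟨_, PrG_nonneg hα hp0.le hp1 (fun f => ¬ ∀ m : Fin q → ℕ, (∑ i, m i) = n →
        (∀ i, β * n ≤ (m i : ℝ)) →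
          ∃ σ : Equiv.Perm (Fin n), (∀ a, f (a, σ a) ≠ none) ∧
            ∀ i, (univ.filter fun a => f (a, σ a) = some i).card = m i), ?_, ?_⟩
    · rw [two_mul]
      refine PrG_or hα hp0.le hp1 _ _ _ ?_ hhalf hhalf'
      intro f hf
      by_contra hcon
      push Not at hcon
      refine hf fun m hm hmb => ?_
      refine det_main hq (by positivity) (le_of_eq (by field_simp)) (by linarith) hcon.1 hcon.2 m hm ?_
      intro i
      rw [hlab]
      have := hmb i
      linarith
    · rw [graphM_eq hα hp0.le hp1, PrG_compl hsum]
  have hlow := (hB.const_mul 2).const_sub 1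
  rw [mul_zero, sub_zero] at hlow
  have hlow' := ENNReal.tendsto_ofReal hlow
  rw [ENNReal.ofReal_one] at hlow'
  refine tendsto_of_tendsto_of_tendsto_of_le_of_le' hlow' tendsto_const_nhds ?_ ?_
  · filter_upwards [key] with n hn
    obtain ⟨P, _, hP, he⟩ := hn
    rw [he]
    exact ENNReal.ofReal_le_ofReal (by linarith)
  · filter_upwards [key] with n hn
    obtain ⟨P, hP, _, he⟩ := hn
    rw [he, ← ENNReal.ofReal_one]
    exact ENNReal.ofReal_le_ofReal (by linarith)
end

section
/- With high probability the following holds: for every perfect matching M of G and every pair of distinct colors i, j ∈ [q] such that |M ∩ Q_i| > βn and |M ∩ Q_j| ≥ βn, there exists a perfect matching M' of G with |M' ∩ Q_i| = |M ∩ Q_i| − 1, |M' ∩ Q_j| = |M ∩ Q_j| + 1, and |M' ∩ Q_l| = |M ∩ Q_l| for every l ∈ [q] \ {i, j}. -/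
open MeasureTheory Filter Finset Asymptotics

/-- A set `U ⊆ S` is closed under out-arcs of `r` inside `S`. -/
def ClosedIn {V : Type*} (S : Finset V) (r : V → V → Prop) (U : Finset V) : Prop :=
  U ⊆ S ∧ ∀ a ∈ U, ∀ b ∈ S, r a b → b ∈ U

/-- There is a small exceptional set outside of which every vertex reaches almost everything. -/
lemma exists_exceptional {V : Type*} [Fintype V] [DecidableEq V] (S : Finset V)
    (r : V → V → Prop) (k : ℕ) (hk : 1 ≤ k) (hS : 4 * k ≤ S.card)
    (hr : ∀ X ⊆ S, ∀ Y ⊆ S, k ≤ X.card → k ≤ Y.card → ∃ x ∈ X, ∃ y ∈ Y, r x y) :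
    ∃ U ⊆ S, U.card < k ∧ ∀ v ∈ S, v ∉ U → ∃ R ⊆ S, S.card < R.card + k ∧
      ∀ x ∈ R, Relation.ReflTransGen r v x := by
  classical
  have dich : ∀ U, ClosedIn S r U → U.card < k ∨ S.card < U.card + k := by
    intro U hU
    by_contra! h
    obtain ⟨h1, h2⟩ := h
    have hc := Finset.card_sdiff_add_card_eq_card hU.1
    obtain ⟨x, hx, y, hy, hxy⟩ := hr U hU.1 (S \ U) Finset.sdiff_subset h1 (by omega)
    rw [Finset.mem_sdiff] at hy
    exact hy.2 (hU.2 x hx y hy.1 hxy)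
  obtain ⟨U, hU, hmax⟩ := Finset.exists_max_image
    (S.powerset.filter fun U => ClosedIn S r U ∧ U.card < k) Finset.card
    ⟨∅, by
      have h0 : 0 < k := by omega
      rw [Finset.mem_filter]
      simp [ClosedIn, h0]⟩
  simp only [Finset.mem_filter, Finset.mem_powerset] at hU hmax
  refine ⟨U, hU.1, hU.2.2, fun v hv hvU => ?_⟩
  let R := S.filter fun x => Relation.ReflTransGen r v x
  have hR : ClosedIn S r R := by
    refine ⟨Finset.filter_subset _ _, fun a ha b hb hab => ?_⟩
    simp only [R, Finset.mem_filter] at ha ⊢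
    exact ⟨hb, ha.2.tail hab⟩
  have hvR : v ∈ R := by simp [R, hv, Relation.ReflTransGen.refl]
  refine ⟨R, hR.1, ?_, fun x hx => (Finset.mem_filter.1 hx).2⟩
  rcases dich R hR with h | h
  · exfalso
    have hc : ClosedIn S r (U ∪ R) := by
      refine ⟨Finset.union_subset hU.1 hR.1, fun a ha b hb hab => ?_⟩
      rcases Finset.mem_union.1 ha with ha | ha
      · exact Finset.mem_union_left _ (hU.2.1.2 a ha b hb hab)
      · exact Finset.mem_union_right _ (hR.2 a ha b hb hab)
    have hcard := Finset.card_union_le U R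
    have hlt : (U ∪ R).card < k := by
      rcases dich _ hc with h' | h'
      · exact h'
      · have := hU.2.2
        omega
    have := hmax (U ∪ R) ⟨hc.1, hc, hlt⟩
    have h3 : U ∪ R = U := (Finset.eq_of_subset_of_card_le Finset.subset_union_left this).symm
    exact hvU (h3 ▸ Finset.mem_union_right _ hvR)
  · exact h

/-- An `s`-arc `x → y` closed up by an `r`-path from `y` to `x`. -/
lemma exists_arc {V : Type*} [Fintype V] [DecidableEq V] (S : Finset V)
    (r s : V → V → Prop) (k : ℕ) (hk : 1 ≤ k) (hS : 4 * k ≤ S.card)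
    (hr : ∀ X ⊆ S, ∀ Y ⊆ S, k ≤ X.card → k ≤ Y.card → ∃ x ∈ X, ∃ y ∈ Y, r x y)
    (hs : ∀ X ⊆ S, ∀ Y ⊆ S, k ≤ X.card → k ≤ Y.card → ∃ x ∈ X, ∃ y ∈ Y, s x y) :
    ∃ x ∈ S, ∃ y ∈ S, x ≠ y ∧ s x y ∧ Relation.ReflTransGen r y x := by
  obtain ⟨U, hUS, hUk, hU⟩ := exists_exceptional S r k hk hS hr
  obtain ⟨W, hWS, hWk, hW⟩ := exists_exceptional S (Function.swap r) k hk hS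
    (fun X hX Y hY h1 h2 => by
      obtain ⟨y, hy, x, hx, h⟩ := hr Y hY X hX h2 h1
      exact ⟨x, hx, y, hy, h⟩)
  have hc := Finset.card_sdiff_add_card_eq_card (Finset.union_subset hUS hWS)
  have hc2 := Finset.card_union_le U W
  obtain ⟨X, hXK, hXk⟩ := Finset.exists_subset_card_eq (s := S \ (U ∪ W)) (n := k) (by omega)
  have hc3 := Finset.card_sdiff_add_card_eq_card hXK
  have hXS : X ⊆ S := hXK.trans Finset.sdiff_subset
  have hYS : (S \ (U ∪ W)) \ X ⊆ S := Finset.sdiff_subset.trans Finset.sdiff_subset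
  obtain ⟨x, hx, y, hy, hxy⟩ := hs X hXS _ hYS hXk.ge (by omega)
  have hy2 := Finset.mem_sdiff.1 hy
  refine ⟨x, hXS hx, y, hYS hy, fun h => hy2.2 (h ▸ hx), hxy, ?_⟩
  have hx1 := Finset.mem_sdiff.1 (hXK hx)
  have hy1 := Finset.mem_sdiff.1 hy2.1
  simp only [Finset.mem_union, not_or] at hx1 hy1
  obtain ⟨R, hRS, hRk, hR⟩ := hU y hy1.1 hy1.2.1
  obtain ⟨T, hTS, hTk, hT⟩ := hW x hx1.1 hx1.2.2
  have hne : (R ∩ T).Nonempty := by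
    rw [← Finset.card_pos]
    have h1 := Finset.card_union_add_card_inter R T
    have h2 := Finset.card_le_card (Finset.union_subset hRS hTS)
    omega
  obtain ⟨z, hz⟩ := hne
  rw [Finset.mem_inter] at hz
  exact (hR z hz.1).trans (Relation.reflTransGen_swap.1 (hT z hz.2))

/-- Vertices reached from `y` by a walk with `d` steps. -/
def StepReach {V : Type*} (r : V → V → Prop) (y : V) : ℕ → V → Prop
  | 0, x => x = y
  | d + 1, x => ∃ x', StepReach r y d x' ∧ r x' x

lemma exists_perm_aux {V : Type*} [DecidableEq V] (r : V → V → Prop) (y : V) (d : ℕ) :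
    ∀ x, StepReach r y d x → (∀ e < d, ¬ StepReach r y e x) →
      ∃ τ : Equiv.Perm V, τ x = y ∧ (∀ a, a ≠ x → τ a = a ∨ r a (τ a)) ∧
        ∀ a, τ a ≠ a → ∃ e ≤ d, StepReach r y e a := by
  induction d with
  | zero =>
    intro x hx _
    exact ⟨1, hx, fun a _ => Or.inl rfl, fun a ha => absurd rfl ha⟩
  | succ d ih =>
    rintro x ⟨x', hx', hr⟩ hmin
    obtain ⟨τ, h1, h2, h3⟩ := ih x' hx' (fun e he h => hmin (e + 1) (by omega) ⟨x', h, hr⟩)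
    have hxx : τ x = x := by
      by_contra h
      obtain ⟨e, he, h⟩ := h3 x h
      exact hmin e (by omega) h
    refine ⟨τ * Equiv.swap x x', by simp [h1], fun a ha => ?_, fun a ha => ?_⟩
    · by_cases hax : a = x'
      · subst hax
        right
        simpa [hxx] using hr
      · rw [Equiv.Perm.mul_apply, Equiv.swap_apply_of_ne_of_ne ha hax]
        exact h2 a hax
    · by_cases hax : a = x'
      · subst hax
        exact ⟨d, by omega, hx'⟩
      · by_cases hax2 : a = x
        · subst hax2
          exact ⟨d + 1, le_rfl, x', hx', hr⟩
        · rw [Equiv.Perm.mul_apply, Equiv.swap_apply_of_ne_of_ne hax2 hax] at ha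
          obtain ⟨e, he, h⟩ := h3 a ha
          exact ⟨e, by omega, h⟩

lemma exists_perm {V : Type*} [DecidableEq V] (r : V → V → Prop) (x y : V)
    (h : Relation.ReflTransGen r y x) :
    ∃ τ : Equiv.Perm V, τ x = y ∧ ∀ a, a ≠ x → τ a = a ∨ r a (τ a) := by
  classical
  have hex : ∃ d, StepReach r y d x := by
    induction h with
    | refl => exact ⟨0, rfl⟩
    | tail _ hbc ih =>
      obtain ⟨d, hd⟩ := ih
      exact ⟨d + 1, _, hd, hbc⟩
  obtain ⟨τ, h1, h2, _⟩ := exists_perm_aux r y (Nat.find hex) x (Nat.find_spec hex)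
    (fun e he => Nat.find_min hex he)
  exact ⟨τ, h1, h2⟩

/-- The deterministic exchange step. -/
lemma exchange_det {n q : ℕ} (f : Fin n × Fin n → Option (Fin q)) (k : ℕ) (hk : 1 ≤ k)
    (hf : ∀ c : Fin q, ∀ X Y : Finset (Fin n), k ≤ X.card → k ≤ Y.card →
      ∃ a ∈ X, ∃ b ∈ Y, f (a, b) = some c)
    (σ : Equiv.Perm (Fin n)) (hσ : ∀ a, f (a, σ a) ≠ none) (i j : Fin q) (hij : i ≠ j)
    (hS : 4 * k ≤ (univ.filter fun a => f (a, σ a) = some i).card) :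
    ∃ σ' : Equiv.Perm (Fin n), (∀ a, f (a, σ' a) ≠ none) ∧
      (univ.filter fun a => f (a, σ' a) = some i).card + 1 =
        (univ.filter fun a => f (a, σ a) = some i).card ∧
      (univ.filter fun a => f (a, σ' a) = some j).card =
        (univ.filter fun a => f (a, σ a) = some j).card + 1 ∧
      ∀ l : Fin q, l ≠ i → l ≠ j →
        (univ.filter fun a => f (a, σ' a) = some l).card =
          (univ.filter fun a => f (a, σ a) = some l).card := by
  classical
  set S := univ.filter fun a => f (a, σ a) = some i with hSdef
  have key : ∀ c : Fin q, ∀ X ⊆ S, ∀ Y ⊆ S, k ≤ X.card → k ≤ Y.card →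
      ∃ x ∈ X, ∃ y ∈ Y, (x ∈ S ∧ y ∈ S ∧ f (x, σ y) = some c) := by
    intro c X hX Y hY h1 h2
    obtain ⟨a, ha, b, hb, hab⟩ := hf c X (Y.map σ.toEmbedding) h1 (by simpa using h2)
    rw [Finset.mem_map] at hb
    obtain ⟨y, hy, rfl⟩ := hb
    exact ⟨a, ha, y, hy, hX ha, hY hy, hab⟩
  obtain ⟨x, hx, y, hy, hxy, hs, hr⟩ := exists_arc S
    (fun a b => a ∈ S ∧ b ∈ S ∧ f (a, σ b) = some i)
    (fun a b => a ∈ S ∧ b ∈ S ∧ f (a, σ b) = some j) k hk hS (key i) (key j)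
  obtain ⟨τ, hτx, hτ⟩ := exists_perm _ x y hr
  have hfx : f (x, σ x) = some i := by simpa [hSdef] using hx
  have hnx : f (x, σ (τ x)) = some j := by rw [hτx]; exact hs.2.2
  have hother : ∀ a, a ≠ x → f (a, σ (τ a)) = f (a, σ a) := by
    intro a ha
    rcases hτ a ha with h | h
    · rw [h]
    · rw [h.2.2]
      have := h.1
      simp only [hSdef, Finset.mem_filter] at this
      exact this.2.symm
  refine ⟨τ.trans σ, fun a => ?_, ?_, ?_, fun l hli hlj => ?_⟩
  · by_cases ha : a = x
    · subst ha; simp [hnx]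
    · simp [hother a ha, hσ a]
  · have : (univ.filter fun a => f (a, (τ.trans σ) a) = some i) = S.erase x := by
      ext a
      rw [Finset.mem_filter, Equiv.trans_apply]
      by_cases ha : a = x
      · subst ha; simp [hnx, hij.symm]
      · simp [hother a ha, ha, hSdef]
    rw [this, Finset.card_erase_add_one hx]
  · have : (univ.filter fun a => f (a, (τ.trans σ) a) = some j) =
        insert x (univ.filter fun a => f (a, σ a) = some j) := by
      ext a
      rw [Finset.mem_filter, Equiv.trans_apply]
      by_cases ha : a = x
      · subst ha; simp [hnx]
      · simp [hother a ha, ha]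
    rw [this, Finset.card_insert_of_notMem]
    simp [hfx, hij]
  · congr 1
    ext a
    rw [Finset.mem_filter, Finset.mem_filter, Equiv.trans_apply]
    by_cases ha : a = x
    · subst ha; simp [hnx, hfx, hli.symm, hlj.symm]
    · simp [hother a ha]

lemma colorM_prob (q : ℕ) (α : Fin q → ℝ) (hα : ∀ i, 0 < α i) (hsum : ∑ i, α i = 1)
    (p : ℝ) (hp0 : 0 ≤ p) (hp1 : p ≤ 1) : IsProbabilityMeasure (colorM q α p) := by
  constructor
  simp only [colorM, Measure.add_apply, Measure.smul_apply, Measure.finsetSum_apply,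
    measure_univ, smul_eq_mul, mul_one]
  rw [← ENNReal.ofReal_sum_of_nonneg (fun i _ => mul_nonneg (hα i).le hp0),
    ← Finset.sum_mul, hsum, ← ENNReal.ofReal_add (by linarith) (by linarith)]
  simp

lemma colorM_compl (q : ℕ) (α : Fin q → ℝ) (hα : ∀ i, 0 < α i) (hsum : ∑ i, α i = 1)
    (p : ℝ) (hp0 : 0 ≤ p) (hp1 : p ≤ 1) (c : Fin q) :
    colorM q α p {some c}ᶜ ≤ ENNReal.ofReal (Real.exp (-(α c * p))) := by
  haveI := colorM_prob q α hα hsum p hp0 hp1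
  have hm : MeasurableSet ({some c} : Set (Option (Fin q))) := trivial
  have h1 : ENNReal.ofReal (α c * p) ≤ colorM q α p {some c} := by
    simp only [colorM, Measure.add_apply, Measure.smul_apply, Measure.finsetSum_apply, smul_eq_mul]
    refine le_trans ?_ le_add_self
    refine le_trans ?_ (Finset.single_le_sum (fun _ _ => bot_le) (Finset.mem_univ c))
    simp [Measure.dirac_apply' _ hm]
  rw [prob_compl_eq_one_sub hm]
  refine (tsub_le_tsub_left h1 1).trans ?_
  rw [← ENNReal.ofReal_one, ← ENNReal.ofReal_sub _ (mul_nonneg (hα c).le hp0)]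
  apply ENNReal.ofReal_le_ofReal
  have := Real.add_one_le_exp (-(α c * p))
  linarith

/-- No `c`-coloured edge between two fixed sets of size at least `k`. -/
lemma graphM_pair (n q : ℕ) (α : Fin q → ℝ) (hα : ∀ i, 0 < α i) (hsum : ∑ i, α i = 1)
    (a : ℝ) (ha : ∀ i, a ≤ α i) (ha0 : 0 < a)
    (p : ℝ) (hp0 : 0 ≤ p) (hp1 : p ≤ 1) (c : Fin q) (k : ℕ) (X Y : Finset (Fin n))
    (hX : k ≤ X.card) (hY : k ≤ Y.card) :
    graphM n q α p {f | ∀ a ∈ X, ∀ b ∈ Y, f (a, b) ≠ some c} ≤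
      ENNReal.ofReal (Real.exp (-(a * p * (k * k)))) := by
  classical
  haveI := colorM_prob q α hα hsum p hp0 hp1
  have hset : {f : Fin n × Fin n → Option (Fin q) | ∀ a ∈ X, ∀ b ∈ Y, f (a, b) ≠ some c} =
      Set.pi Set.univ (fun e => if e ∈ X ×ˢ Y then ({some c}ᶜ : Set (Option (Fin q)))
        else Set.univ) := by
    ext f
    simp only [Set.mem_setOf_eq, Set.mem_pi, Set.mem_univ, true_imp_iff, Prod.forall,
      Finset.mem_product]
    refine forall_congr' fun a => ?_
    constructor
    · intro h b
      split_ifs with hab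
      · exact h hab.1 b hab.2
      · trivial
    · intro h haX b hbY
      have := h b
      rw [if_pos ⟨haX, hbY⟩] at this
      exact this
  rw [hset, graphM, Measure.pi_pi]
  have h1 : ∀ e : Fin n × Fin n, colorM q α p (if e ∈ X ×ˢ Y then
      ({some c}ᶜ : Set (Option (Fin q))) else Set.univ) ≤
      if e ∈ X ×ˢ Y then ENNReal.ofReal (Real.exp (-(a * p))) else 1 := by
    intro e
    split_ifs
    · refine (colorM_compl q α hα hsum p hp0 hp1 c).trans ?_
      apply ENNReal.ofReal_le_ofReal
      apply Real.exp_le_exp.2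
      have := mul_le_mul_of_nonneg_right (ha c) hp0
      linarith
    · exact prob_le_one
  refine (Finset.prod_le_prod' fun e _ => h1 e).trans ?_
  rw [Finset.prod_ite_mem, Finset.univ_inter, Finset.prod_const, Finset.card_product,
    ← ENNReal.ofReal_pow (Real.exp_pos _).le, ← Real.exp_nat_mul]
  apply ENNReal.ofReal_le_ofReal
  apply Real.exp_le_exp.2
  have h2 : ((k * k : ℕ) : ℝ) ≤ ((X.card * Y.card : ℕ) : ℝ) := by
    exact_mod_cast Nat.mul_le_mul hX hY
  have h3 := mul_le_mul_of_nonneg_right h2 (mul_nonneg ha0.le hp0)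
  push_cast at h3 ⊢
  linarith

lemma graphM_bad (n q : ℕ) (α : Fin q → ℝ) (hα : ∀ i, 0 < α i) (hsum : ∑ i, α i = 1)
    (a : ℝ) (ha : ∀ i, a ≤ α i) (ha0 : 0 < a)
    (p : ℝ) (hp0 : 0 ≤ p) (hp1 : p ≤ 1) (k : ℕ) :
    graphM n q α p {f | ¬ ∀ c : Fin q, ∀ X Y : Finset (Fin n), k ≤ X.card → k ≤ Y.card →
      ∃ a ∈ X, ∃ b ∈ Y, f (a, b) = some c} ≤
      ENNReal.ofReal (q * 4 ^ n * Real.exp (-(a * p * (k * k)))) := by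
  classical
  let I := Fin q × Finset (Fin n) × Finset (Fin n)
  let J : Finset I := univ.filter fun t => k ≤ t.2.1.card ∧ k ≤ t.2.2.card
  have hsub : {f : Fin n × Fin n → Option (Fin q) |
      ¬ ∀ c : Fin q, ∀ X Y : Finset (Fin n), k ≤ X.card → k ≤ Y.card →
      ∃ a ∈ X, ∃ b ∈ Y, f (a, b) = some c} ⊆
      ⋃ t ∈ J, {f | ∀ a ∈ t.2.1, ∀ b ∈ t.2.2, f (a, b) ≠ some t.1} := by
    intro f hf
    simp only [Set.mem_setOf_eq] at hf
    push Not at hf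
    obtain ⟨c, X, Y, h1, h2, h3⟩ := hf
    simp only [Set.mem_iUnion]
    exact ⟨(c, X, Y), by simp [J, h1, h2], h3⟩
  refine (measure_mono hsub).trans ((measure_biUnion_finset_le _ _).trans ?_)
  refine (Finset.sum_le_card_nsmul J _ (ENNReal.ofReal (Real.exp (-(a * p * (k * k))))) ?_).trans ?_
  · intro t ht
    have ht' := (Finset.mem_filter.1 ht).2
    exact graphM_pair n q α hα hsum a ha ha0 p hp0 hp1 t.1 k _ _ ht'.1 ht'.2
  · rw [nsmul_eq_mul, ← ENNReal.ofReal_natCast, ← ENNReal.ofReal_mul (by positivity)]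
    apply ENNReal.ofReal_le_ofReal
    apply mul_le_mul_of_nonneg_right _ (Real.exp_pos _).le
    have hJ : J.card ≤ q * (2 ^ n * 2 ^ n) := by
      refine (Finset.card_le_univ J).trans ?_
      simp [I]
    have h4 : (q : ℝ) * 4 ^ n = ((q * (2 ^ n * 2 ^ n) : ℕ) : ℝ) := by
      push_cast
      rw [← mul_pow]
      norm_num
    rw [h4]
    exact_mod_cast hJ

/-- w.h.p., for every perfect matching `M` and distinct colors `i, j` with
`|M ∩ Qᵢ| > βn` and `|M ∩ Q_j| ≥ βn`, there is a perfect matching `M'` with one fewer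
edge of color `i`, one more of color `j`, and the same number of every other color. -/
theorem color_exchange (q : ℕ) (hq : 2 ≤ q) (α : Fin q → ℝ)
    (hα : ∀ i, 0 < α i) (hsum : ∑ i, α i = 1)
    (β : ℝ) (hβ : 0 < β) (hβq : β < 1 / q)
    (w : ℕ → ℝ) (hw : Tendsto w atTop atTop)
    (hwo : w =o[atTop] fun n => Real.log n) :
    Tendsto (fun n =>
      graphM n q α ((Real.log n + w n) / n)
        {f | ∀ σ : Equiv.Perm (Fin n), (∀ a, f (a, σ a) ≠ none) →
          ∀ i j : Fin q, i ≠ j →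
            β * n < ((univ.filter fun a => f (a, σ a) = some i).card : ℝ) →
            β * n ≤ ((univ.filter fun a => f (a, σ a) = some j).card : ℝ) →
            ∃ σ' : Equiv.Perm (Fin n), (∀ a, f (a, σ' a) ≠ none) ∧
              (univ.filter fun a => f (a, σ' a) = some i).card + 1 =
                (univ.filter fun a => f (a, σ a) = some i).card ∧
              (univ.filter fun a => f (a, σ' a) = some j).card =
                (univ.filter fun a => f (a, σ a) = some j).card + 1 ∧
              ∀ l : Fin q, l ≠ i → l ≠ j →
                (univ.filter fun a => f (a, σ' a) = some l).card =
                  (univ.filter fun a => f (a, σ a) = some l).card})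
      atTop (nhds 1) := by
  classical
  haveI : Nonempty (Fin q) := ⟨⟨0, by omega⟩⟩
  obtain ⟨i0, -, hi0⟩ := Finset.exists_min_image (univ : Finset (Fin q)) α Finset.univ_nonempty
  have ha : ∀ i, α i0 ≤ α i := fun i => hi0 i (Finset.mem_univ i)
  have ha0 := hα i0
  set a := α i0
  have hlog : Tendsto (fun n : ℕ => Real.log n) atTop atTop :=
    Real.tendsto_log_atTop.comp tendsto_natCast_atTop_atTop
  have hlogn : ∀ᶠ n : ℕ in atTop, Real.log n ≤ (1 / 2) * n := by
    have h := Real.isLittleO_log_id_atTop.bound (show (0 : ℝ) < 1 / 2 by norm_num)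
    have h' := tendsto_natCast_atTop_atTop (R := ℝ) |>.eventually h
    filter_upwards [h'] with n hn
    simp only [id, Real.norm_eq_abs, Nat.abs_cast] at hn
    exact (le_abs_self _).trans hn
  have hwlog : ∀ᶠ n : ℕ in atTop, w n ≤ Real.log n := by
    filter_upwards [hwo.bound (show (0 : ℝ) < 1 by norm_num), hlog.eventually_ge_atTop 0]
      with n hn h0
    rw [Real.norm_eq_abs, Real.norm_eq_abs, abs_of_nonneg h0, one_mul] at hn
    exact (le_abs_self _).trans hn
  have hbig : ∀ᶠ n : ℕ in atTop, 8 ≤ β * n :=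
    (tendsto_natCast_atTop_atTop.const_mul_atTop hβ).eventually_ge_atTop 8
  have hc0 : 0 < a * β ^ 2 / 64 := by positivity
  have hlogbig : ∀ᶠ n : ℕ in atTop, Real.log 4 + 1 ≤ a * β ^ 2 / 64 * Real.log n :=
    (hlog.const_mul_atTop hc0).eventually_ge_atTop _
  have hev : ∀ᶠ n : ℕ in atTop, IsProbabilityMeasure (graphM n q α ((Real.log n + w n) / n)) ∧
      (graphM n q α ((Real.log n + w n) / n)
        {f | ¬ ∀ c : Fin q, ∀ X Y : Finset (Fin n), ⌊β * n / 4⌋₊ ≤ X.card →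
          ⌊β * n / 4⌋₊ ≤ Y.card → ∃ a ∈ X, ∃ b ∈ Y, f (a, b) = some c} ≤
        ENNReal.ofReal (q * Real.exp (-n))) ∧ 8 ≤ β * n := by
    filter_upwards [hlogn, hwlog, hbig, hlogbig, hw.eventually_ge_atTop 0,
      hlog.eventually_ge_atTop 0, eventually_gt_atTop 0] with n h1 h2 h3 h4 h5 h6 h7
    have hn : (0 : ℝ) < n := by exact_mod_cast h7
    have hp0 : 0 ≤ (Real.log n + w n) / n := by positivity
    have hp1 : (Real.log n + w n) / n ≤ 1 := by
      rw [div_le_one hn]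
      linarith
    haveI := colorM_prob q α hα hsum _ hp0 hp1
    refine ⟨by unfold graphM; infer_instance, ?_, h3⟩
    refine (graphM_bad n q α hα hsum a ha ha0 _ hp0 hp1 _).trans ?_
    apply ENNReal.ofReal_le_ofReal
    rw [mul_assoc]
    apply mul_le_mul_of_nonneg_left _ (Nat.cast_nonneg q)
    have hk : β * n / 8 ≤ (⌊β * n / 4⌋₊ : ℝ) := by
      have := Nat.lt_floor_add_one (β * n / 4)
      linarith
    set k : ℝ := (⌊β * n / 4⌋₊ : ℝ)
    have hkk : (β * n / 8) * (β * n / 8) ≤ k * k :=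
      mul_self_le_mul_self (by positivity) hk
    have hpl : Real.log n / n ≤ (Real.log n + w n) / n := by
      gcongr
      linarith
    have hexp : n * (a * β ^ 2 / 64 * Real.log n) ≤
        a * ((Real.log n + w n) / n) * (k * k) := by
      calc n * (a * β ^ 2 / 64 * Real.log n)
          = a * (Real.log n / n) * ((β * n / 8) * (β * n / 8)) := by
            field_simp
            ring
        _ ≤ _ := by gcongr
    have h44 : (4 : ℝ) ^ n = Real.exp (n * Real.log 4) := by
      rw [Real.exp_nat_mul, Real.exp_log (by norm_num)]
    rw [h44, ← Real.exp_add]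
    apply Real.exp_le_exp.2
    have := mul_le_mul_of_nonneg_left h4 hn.le
    linarith
  have hlim : Tendsto (fun n : ℕ => 1 - ENNReal.ofReal (q * Real.exp (-n))) atTop (nhds 1) := by
    have h1 : Tendsto (fun n : ℕ => (q : ℝ) * Real.exp (-n)) atTop (nhds 0) := by
      have := (Real.tendsto_exp_neg_atTop_nhds_zero.comp
        (tendsto_natCast_atTop_atTop (R := ℝ))).const_mul (q : ℝ)
      simpa using this
    have h2 := ENNReal.tendsto_ofReal h1
    rw [ENNReal.ofReal_zero] at h2
    have h3 := ENNReal.Tendsto.sub (tendsto_const_nhds (x := (1 : ENNReal)) (f := atTop)) h2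
      (Or.inl ENNReal.one_ne_top)
    simpa using h3
  refine tendsto_of_tendsto_of_tendsto_of_le_of_le' hlim tendsto_const_nhds ?_ ?_
  · filter_upwards [hev] with n hn
    obtain ⟨hprob, hbad, h8⟩ := hn
    rw [tsub_le_iff_right]
    refine le_trans ?_ (add_le_add_right hbad _)
    rw [← measure_univ (μ := graphM n q α ((Real.log n + w n) / n))]
    refine le_trans (measure_mono ?_) (measure_union_le _ _)
    intro f _
    by_cases hf : ∀ c : Fin q, ∀ X Y : Finset (Fin n), ⌊β * n / 4⌋₊ ≤ X.card →
          ⌊β * n / 4⌋₊ ≤ Y.card → ∃ a ∈ X, ∃ b ∈ Y, f (a, b) = some c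
    · left
      intro σ hσ i j hij hi _
      refine exchange_det f ⌊β * n / 4⌋₊ ?_ hf σ hσ i j hij ?_
      · apply Nat.le_floor
        push_cast
        linarith
      · have h9 := Nat.floor_le (show 0 ≤ β * n / 4 by linarith)
        have h10 : ((4 * ⌊β * n / 4⌋₊ : ℕ) : ℝ) ≤
            ((univ.filter fun a => f (a, σ a) = some i).card : ℝ) := by
          push_cast
          linarith
        exact_mod_cast h10
    · right
      exact hf
  · filter_upwards [hev] with n hn
    haveI := hn.1
    exact prob_le_one
end

section
/- For every constant ε > 0, with high probability G contains a perfect matching M such that | |M ∩ Q_i| − α_i n | ≤ εn for every color i ∈ [q]. -/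
open MeasureTheory Filter Finset Asymptotics

instance (q : ℕ) : DiscreteMeasurableSpace (Option (Fin q)) := ⟨fun _ => trivial⟩

/-- Bernoulli edge indicator. -/
noncomputable def bernM (p : ℝ) : Measure Bool :=
  ENNReal.ofReal (1 - p) • Measure.dirac false + ENNReal.ofReal p • Measure.dirac true

/-- Color distribution. -/
noncomputable def colM (q : ℕ) (α : Fin q → ℝ) : Measure (Fin q) :=
  ∑ i : Fin q, ENNReal.ofReal (α i) • Measure.dirac i

theorem bernM_false (p : ℝ) : bernM p {false} = ENNReal.ofReal (1 - p) := by
  simp [bernM]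

theorem bernM_true (p : ℝ) : bernM p {true} = ENNReal.ofReal p := by
  simp [bernM]

theorem bernM_prob {p : ℝ} (h0 : 0 ≤ p) (h1 : p ≤ 1) : IsProbabilityMeasure (bernM p) := by
  constructor
  simp only [bernM, Measure.coe_add, Measure.coe_smul, Pi.add_apply, Pi.smul_apply, measure_univ,
    smul_eq_mul, mul_one]
  rw [← ENNReal.ofReal_add (by linarith) h0]
  simp

theorem colM_singleton (q : ℕ) (α : Fin q → ℝ) (i : Fin q) :
    colM q α {i} = ENNReal.ofReal (α i) := by
  simp [colM, Finset.sum_apply, Set.indicator_apply]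

theorem colM_prob (q : ℕ) (α : Fin q → ℝ) (hα : ∀ i, 0 < α i) (hsum : ∑ i, α i = 1) :
    IsProbabilityMeasure (colM q α) := by
  constructor
  simp only [colM, Measure.coe_finsetSum, Finset.sum_apply, Measure.coe_smul, Pi.smul_apply,
    measure_univ, smul_eq_mul, mul_one]
  rw [← ENNReal.ofReal_sum_of_nonneg (fun i _ => (hα i).le), hsum]
  simp

/-- Combine an edge indicator with a color. -/
def comb (q : ℕ) (x : Bool × Fin q) : Option (Fin q) := if x.1 then some x.2 else none

theorem colorM_eq (q : ℕ) (α : Fin q → ℝ) (hα : ∀ i, 0 < α i) (hsum : ∑ i, α i = 1) (p : ℝ)  :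
    colorM q α p = Measure.map (comb q) ((bernM p).prod (colM q α)) := by
  have := colM_prob q α hα hsum
  apply Measure.ext_of_singleton
  intro a
  rw [Measure.map_apply (measurable_of_finite _) (measurableSet_singleton a)]
  cases a with
  | none =>
    have : comb q ⁻¹' {none} = {false} ×ˢ Set.univ := by
      ext ⟨b, c⟩; cases b <;> simp [comb]
    rw [this, Measure.prod_prod, bernM_false, measure_univ]
    simp [colorM, Measure.coe_finsetSum, Finset.sum_apply]
  | some i =>
    have : comb q ⁻¹' {some i} = {true} ×ˢ {i} := by
      ext ⟨b, c⟩; cases b <;> simp [comb]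
    rw [this, Measure.prod_prod, bernM_true, colM_singleton, ← ENNReal.ofReal_mul' (hα i).le]
    simp [colorM, Measure.coe_finsetSum, Finset.sum_apply, Set.indicator_apply, mul_comm]

theorem graphM_eq_s2 (n q : ℕ) (α : Fin q → ℝ) (hα : ∀ i, 0 < α i) (hsum : ∑ i, α i = 1) (p : ℝ)
    (h0 : 0 ≤ p) (h1 : p ≤ 1) :
    graphM n q α p = Measure.map (fun x e => comb q (x.1 e, x.2 e))
      ((Measure.pi fun _ : Fin n × Fin n => bernM p).prod
        (Measure.pi fun _ : Fin n × Fin n => colM q α)) := by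
  have := colM_prob q α hα hsum
  have := bernM_prob h0 h1
  have hmp := measurePreserving_arrowProdEquivProdArrow Bool (Fin q) (Fin n × Fin n)
    (fun _ => bernM p) (fun _ => colM q α)
  rw [← hmp.map_eq, Measure.map_map (measurable_of_finite _) hmp.measurable]
  unfold graphM
  simp only [colorM_eq q α hα hsum]
  have : IsProbabilityMeasure (Measure.map (comb q) ((bernM p).prod (colM q α))) :=
    Measure.isProbabilityMeasure_map (measurable_of_finite _).aemeasurable
  rw [← Measure.pi_map_pi (fun _ => (measurable_of_finite _).aemeasurable)]
  rfl

theorem cheb (n q : ℕ) (α : Fin q → ℝ) (hα : ∀ i, 0 < α i) (hsum : ∑ i, α i = 1)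
    (ε : ℝ) (hε : 0 < ε) (hn : 0 < n) (σ : Equiv.Perm (Fin n)) (i : Fin q) :
    (Measure.pi fun _ : Fin n × Fin n => colM q α)
      {C | ε * n < |((univ.filter fun a => C (a, σ a) = i).card : ℝ) - α i * n|}
      ≤ ENNReal.ofReal (1 / (ε ^ 2 * n)) := by
  have hcp := colM_prob q α hα hsum
  set μ := Measure.pi fun _ : Fin n × Fin n => colM q α with hμ
  let g : Fin q → ℝ := fun c => if c = i then 1 else 0
  let X : Fin n → (Fin n × Fin n → Fin q) → ℝ := fun a C => g (C (a, σ a))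
  have hX : ∀ C, ((univ.filter fun a => C (a, σ a) = i).card : ℝ) = (∑ a, X a) C := by
    intro C; simp [X, g, Finset.sum_apply]
  have hXm : ∀ a, Measurable (X a) := fun a => measurable_of_finite _
  have hL : ∀ a, MemLp (X a) 2 μ := by
    intro a
    refine MemLp.of_bound (hXm a).aestronglyMeasurable 1 (ae_of_all _ fun C => ?_)
    simp only [X, g]; split_ifs <;> simp
  have hmean : ∀ a, ∫ C, X a C ∂μ = α i := by
    intro a
    have hev := measurePreserving_eval (fun _ : Fin n × Fin n => colM q α) (a, σ a)
    have : ∫ C, X a C ∂μ = ∫ c, g c ∂(colM q α) := by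
      rw [← hev.map_eq, integral_map hev.measurable.aemeasurable
        (measurable_of_finite _).aestronglyMeasurable]
    rw [this]
    have : g = Set.indicator {i} 1 := by
      ext c; simp [g, Set.indicator_apply]
    rw [this, integral_indicator_one (measurableSet_singleton i), measureReal_def, colM_singleton,
      ENNReal.toReal_ofReal (hα i).le]
  have hmeanS : ∫ C, (∑ a, X a) C ∂μ = α i * n := by
    simp only [Finset.sum_apply]
    rw [integral_finsetSum _ (fun a _ => (hL a).integrable (by norm_num))]
    simp [hmean, mul_comm]
  have hind : ProbabilityTheory.iIndepFun X μ := by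
    have := ProbabilityTheory.iIndepFun_pi (μ := fun _ : Fin n × Fin n => colM q α)
      (X := fun _ => g) (fun _ => (measurable_of_finite _).aemeasurable)
    exact this.precomp (g := fun a : Fin n => (a, σ a)) (fun a b h => (Prod.mk.inj h).1)
  have hvar : ProbabilityTheory.variance (∑ a, X a) μ ≤ n := by
    rw [ProbabilityTheory.IndepFun.variance_sum (fun a _ => hL a)
      (fun a _ b _ hab => hind.indepFun hab)]
    calc _ ≤ ∑ a : Fin n, (1 : ℝ) := by
          refine Finset.sum_le_sum fun a _ => ?_
          refine (ProbabilityTheory.variance_le_sq_of_bounded (a := 0) (b := 1)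
            (ae_of_all _ fun C => ?_) (hXm a).aemeasurable).trans (by norm_num)
          simp only [X, g]; split_ifs <;> simp
      _ = n := by simp
  have hn' : (0 : ℝ) < n := by exact_mod_cast hn
  have hc := ProbabilityTheory.meas_ge_le_variance_div_sq (μ := μ) (X := ∑ a, X a)
    (memLp_finsetSum' _ fun a _ => hL a) (c := ε * n) (by positivity)
  rw [hmeanS] at hc
  refine (measure_mono ?_).trans (hc.trans (ENNReal.ofReal_le_ofReal ?_))
  · intro C hC
    simp only [Set.mem_ofPred_eq] at hC ⊢
    rw [hX] at hC
    exact hC.le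
  · rw [div_le_div_iff₀ (by positivity) (by positivity)]
    nlinarith [mul_le_mul_of_nonneg_right hvar (show 0 ≤ ε ^ 2 * (n : ℝ) by positivity)]

/-- Color event. -/
def GoodF (n q : ℕ) (α : Fin q → ℝ) (ε : ℝ) (f : Fin n × Fin n → Option (Fin q)) : Prop :=
  ∃ σ : Equiv.Perm (Fin n), (∀ a, f (a, σ a) ≠ none) ∧
    ∀ i, |((univ.filter fun a => f (a, σ a) = some i).card : ℝ) - α i * n| ≤ ε * n

theorem cheb_all (n q : ℕ) (α : Fin q → ℝ) (hα : ∀ i, 0 < α i) (hsum : ∑ i, α i = 1)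
    (ε : ℝ) (hε : 0 < ε) (hn : 0 < n) (E : Fin n × Fin n → Bool) (σ : Equiv.Perm (Fin n))
    (hσ : ∀ a, E (a, σ a) = true) :
    (Measure.pi fun _ : Fin n × Fin n => colM q α)
      {C | ¬ GoodF n q α ε (fun e => comb q (E e, C e))}
      ≤ q * ENNReal.ofReal (1 / (ε ^ 2 * n)) := by
  have hsub : {C : Fin n × Fin n → Fin q | ¬ GoodF n q α ε (fun e => comb q (E e, C e))} ⊆
      ⋃ i ∈ (univ : Finset (Fin q)),
        {C | ε * n < |((univ.filter fun a => C (a, σ a) = i).card : ℝ) - α i * n|} := by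
    intro C hC
    by_contra hcon
    apply hC
    simp only [Set.mem_iUnion, Set.mem_ofPred_eq, not_exists, not_lt] at hcon
    refine ⟨σ, fun a => by simp [comb, hσ a], fun i => ?_⟩
    simpa [comb, hσ] using hcon i (Finset.mem_univ i)
  refine (measure_mono hsub).trans ((measure_biUnion_finset_le _ _).trans ?_)
  refine (Finset.sum_le_sum fun i _ => cheb n q α hα hsum ε hε hn σ i).trans ?_
  simp

/-- Reduction to the existence of a perfect matching. -/
theorem reduction (n q : ℕ) (α : Fin q → ℝ) (hα : ∀ i, 0 < α i) (hsum : ∑ i, α i = 1) (p : ℝ)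
    (h0 : 0 ≤ p) (h1 : p ≤ 1) (ε : ℝ) (hε : 0 < ε) (hn : 0 < n) :
    graphM n q α p {f | ¬ GoodF n q α ε f} ≤
      (Measure.pi fun _ : Fin n × Fin n => bernM p)
        {E | ¬ ∃ σ : Equiv.Perm (Fin n), ∀ a, E (a, σ a) = true} +
      q * ENNReal.ofReal (1 / (ε ^ 2 * n)) := by
  have hcp := colM_prob q α hα hsum
  have hbp := bernM_prob h0 h1
  rw [graphM_eq_s2 n q α hα hsum p h0 h1, Measure.map_apply (measurable_of_finite _)
    (Set.toFinite _).measurableSet, Measure.prod_apply (Set.toFinite _).measurableSet]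
  set N : Set (Fin n × Fin n → Bool) :=
    {E | ¬ ∃ σ : Equiv.Perm (Fin n), ∀ a, E (a, σ a) = true} with hN
  have hNm : MeasurableSet N := (Set.toFinite _).measurableSet
  have key : ∀ E, (Measure.pi fun _ : Fin n × Fin n => colM q α)
      {C | ¬ GoodF n q α ε (fun e => comb q (E e, C e))} ≤
      N.indicator 1 E + q * ENNReal.ofReal (1 / (ε ^ 2 * n)) := by
    intro E
    by_cases hE : E ∈ N
    · rw [Set.indicator_of_mem hE]
      exact prob_le_one.trans le_self_add
    · have : ∃ σ : Equiv.Perm (Fin n), ∀ a, E (a, σ a) = true := not_not.1 hE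
      obtain ⟨σ, hσ⟩ := this
      exact (cheb_all n q α hα hsum ε hε hn E σ hσ).trans le_add_self
  refine (lintegral_mono key).trans ?_
  rw [lintegral_add_right _ measurable_const, lintegral_indicator_one hNm]
  simp

def BadSet {n : ℕ} (R : Fin n → Fin n → Prop) : Prop :=
  ∃ S T : Finset (Fin n), T.card + 1 = S.card ∧ 2 * S.card ≤ n + 1 ∧
    (∀ s ∈ S, ∀ t, t ∉ T → ¬ R s t) ∧
    ∀ t ∈ T, ∃ x ∈ S.offDiag, R x.1 t ∧ R x.2 t

open Classical in
noncomputable def nbr {n : ℕ} (R : Fin n → Fin n → Prop) (S : Finset (Fin n)) : Finset (Fin n) :=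
  S.biUnion fun a => univ.filter (R a)

theorem mem_nbr {n : ℕ} {R : Fin n → Fin n → Prop} {S : Finset (Fin n)} {t : Fin n} :
    t ∈ nbr R S ↔ ∃ s ∈ S, R s t := by
  simp [nbr]

theorem badSet_of_min {n : ℕ} (R : Fin n → Fin n → Prop) (S : Finset (Fin n))
    (hS : (nbr R S).card < S.card)
    (h1 : ∀ S' : Finset (Fin n), S'.card < S.card → S'.card ≤ (nbr R S').card)
    (h2 : ∀ S' : Finset (Fin n), S'.card < S.card →
      S'.card ≤ (nbr (fun a b => R b a) S').card) : BadSet R := by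
  have hpos : 0 < S.card := by omega
  have hcard : (nbr R S).card + 1 = S.card := by
    obtain ⟨s, hs⟩ := Finset.card_pos.1 hpos
    have := h1 (S.erase s) (by rw [Finset.card_erase_of_mem hs]; omega)
    have h3 : nbr R (S.erase s) ⊆ nbr R S := by
      intro t; simp only [mem_nbr]; rintro ⟨x, hx, h⟩; exact ⟨x, Finset.mem_of_mem_erase hx, h⟩
    have := Finset.card_le_card h3
    rw [Finset.card_erase_of_mem hs] at *
    omega
  refine ⟨S, nbr R S, hcard, ?_, ?_, ?_⟩
  · by_contra hlt
    have hc : (nbr R S)ᶜ.card = n - (nbr R S).card := by simp [Finset.card_compl]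
    have hSn : S.card ≤ n := by simpa using Finset.card_le_univ S
    have := h2 (nbr R S)ᶜ (by omega)
    have h3 : nbr (fun a b => R b a) (nbr R S)ᶜ ⊆ Sᶜ := by
      intro t; simp only [mem_nbr, Finset.mem_compl]
      rintro ⟨x, hx, h⟩ ht
      exact hx ⟨t, ht, h⟩
    have h4 := Finset.card_le_card h3
    have : Sᶜ.card = n - S.card := by simp [Finset.card_compl]
    omega
  · intro s hs t ht h
    exact ht (mem_nbr.2 ⟨s, hs, h⟩)
  · intro t ht
    obtain ⟨s, hs, hst⟩ := mem_nbr.1 ht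
    by_contra hno
    have := h1 (S.erase s) (by rw [Finset.card_erase_of_mem hs]; omega)
    have h3 : nbr R (S.erase s) ⊆ (nbr R S).erase t := by
      intro u hu
      obtain ⟨x, hx, h⟩ := mem_nbr.1 hu
      rw [Finset.mem_erase] at hx
      refine Finset.mem_erase.2 ⟨?_, mem_nbr.2 ⟨x, hx.2, h⟩⟩
      rintro rfl
      exact hno ⟨(x, s), by simp [Finset.mem_offDiag, hx, hs], h, hst⟩
    have h4 := Finset.card_le_card h3
    have h5 := Finset.card_erase_of_mem hs
    have h6 := Finset.card_erase_of_mem ht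
    have h7 : 0 < (nbr R S).card := Finset.card_pos.2 ⟨t, ht⟩
    omega

theorem hall_bad {n : ℕ} (R : Fin n → Fin n → Prop)
    (hno : ¬ ∃ σ : Equiv.Perm (Fin n), ∀ a, R a (σ a)) :
    BadSet R ∨ BadSet (fun a b => R b a) := by
  classical
  have hex : ∃ k, ∃ S : Finset (Fin n), S.card = k ∧
      ((nbr R S).card < S.card ∨ (nbr (fun a b => R b a) S).card < S.card) := by
    by_contra hcon
    push Not at hcon
    have := (Finset.all_card_le_biUnion_card_iff_exists_injective
      (fun a => univ.filter (R a))).1 (fun s => by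
        have := (hcon _ s rfl).1
        unfold nbr at this
        convert this)
    obtain ⟨f, hf, hR⟩ := this
    refine hno ⟨Equiv.ofBijective f (Finite.injective_iff_bijective.1 hf), fun a => ?_⟩
    simpa using hR a
  obtain ⟨S, hS, hv⟩ := Nat.find_spec hex
  have hmin : ∀ S' : Finset (Fin n), S'.card < S.card → S'.card ≤ (nbr R S').card ∧
      S'.card ≤ (nbr (fun a b => R b a) S').card := by
    intro S' h
    rw [hS] at h
    have := Nat.find_min hex h
    push Not at this
    exact this S' rfl
  rcases hv with hv | hv
  · exact Or.inl (badSet_of_min R S hv (fun S' h => (hmin S' h).1) (fun S' h => (hmin S' h).2))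
  · exact Or.inr (badSet_of_min _ S hv (fun S' h => (hmin S' h).2) (fun S' h => (hmin S' h).1))

theorem box_prob {ι : Type*} [Fintype ι] [DecidableEq ι] {p : ℝ} (h0 : 0 ≤ p) (h1 : p ≤ 1)
    (F₁ F₂ : Finset ι) (hd : Disjoint F₁ F₂) :
    (Measure.pi fun _ : ι => bernM p).real
      {E | (∀ x ∈ F₁, E x = false) ∧ ∀ x ∈ F₂, E x = true} =
      (1 - p) ^ F₁.card * p ^ F₂.card := by
  have hbp := bernM_prob h0 h1
  have hset : {E : ι → Bool | (∀ x ∈ F₁, E x = false) ∧ ∀ x ∈ F₂, E x = true} =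
      Set.univ.pi fun x => if x ∈ F₁ then {false} else if x ∈ F₂ then {true} else Set.univ := by
    ext E
    simp only [Set.mem_ofPred_eq, Set.mem_pi, Set.mem_univ, true_implies]
    constructor
    · rintro ⟨h1, h2⟩ x
      split_ifs with h h'
      · exact h1 x h
      · exact h2 x h'
      · trivial
    · intro h
      refine ⟨fun x hx => ?_, fun x hx => ?_⟩
      · simpa [hx] using h x
      · have : x ∉ F₁ := fun h => (Finset.disjoint_left.1 hd h hx)
        simpa [hx, this] using h x
  have hval : ∀ x : ι, bernM p (if x ∈ F₁ then {false} else if x ∈ F₂ then {true} else Set.univ)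
      = (if x ∈ F₁ then ENNReal.ofReal (1 - p) else 1) * (if x ∈ F₂ then ENNReal.ofReal p else 1) := by
    intro x
    by_cases hx : x ∈ F₁
    · have : x ∉ F₂ := Finset.disjoint_left.1 hd hx
      simp [hx, this, bernM_false]
    · by_cases hx' : x ∈ F₂
      · simp [hx, hx', bernM_true]
      · simp only [hx, hx', if_false, measure_univ, mul_one]
  rw [measureReal_def, hset, Measure.pi_pi]
  simp only [hval]
  rw [Finset.prod_mul_distrib]
  simp [ENNReal.toReal_mul, ENNReal.toReal_ofReal, h0, h1]

/-- Bound for fixed sets. -/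
theorem fixed_prob {n : ℕ} {p : ℝ} (h0 : 0 ≤ p) (h1 : p ≤ 1)
    (e : Fin n × Fin n ≃ Fin n × Fin n) (S T : Finset (Fin n)) :
    (Measure.pi fun _ : Fin n × Fin n => bernM p).real
      {E | (∀ s ∈ S, ∀ t, t ∉ T → ¬ E (e (s, t)) = true) ∧
        ∀ t ∈ T, ∃ x ∈ S.offDiag, E (e (x.1, t)) = true ∧ E (e (x.2, t)) = true} ≤
      (S.offDiag.card : ℝ) ^ T.card * ((1 - p) ^ (S.card * (n - T.card)) * p ^ (2 * T.card)) := by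
  classical
  have hbp := bernM_prob h0 h1
  let F₁ : Finset (Fin n × Fin n) := (S ×ˢ Tᶜ).map e.toEmbedding
  let G₁ : (T → Fin n × Fin n) → Finset (Fin n × Fin n) := fun h =>
    univ.image fun t : T => ((h t).1, (t : Fin n))
  let G₂ : (T → Fin n × Fin n) → Finset (Fin n × Fin n) := fun h =>
    univ.image fun t : T => ((h t).2, (t : Fin n))
  let F₂ : (T → Fin n × Fin n) → Finset (Fin n × Fin n) := fun h =>
    (G₁ h ∪ G₂ h).map e.toEmbedding
  let H : Finset (T → Fin n × Fin n) := Fintype.piFinset fun _ => S.offDiag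
  have hH : (H.card : ℝ) = (S.offDiag.card : ℝ) ^ T.card := by
    simp [H, Fintype.card_piFinset]
  have hF₁ : F₁.card = S.card * (n - T.card) := by
    simp [F₁, Finset.card_product, Finset.card_compl]
  have hF₂ : ∀ h ∈ H, (F₂ h).card = 2 * T.card := by
    intro h hh
    simp only [F₂, Finset.card_map]
    rw [Finset.card_union_of_disjoint, Finset.card_image_of_injective,
      Finset.card_image_of_injective]
    · simp [two_mul]
    · intro a b hab; exact Subtype.ext (Prod.mk.inj hab).2
    · intro a b hab; exact Subtype.ext (Prod.mk.inj hab).2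
    · rw [Finset.disjoint_left]
      intro x hx hx'
      simp only [G₁, G₂, Finset.mem_image, Finset.mem_univ, true_and] at hx hx'
      obtain ⟨a, ha⟩ := hx
      obtain ⟨b, hb⟩ := hx'
      have hab : a = b := Subtype.ext (by
        have h1 := congrArg Prod.snd ha
        have h2 := congrArg Prod.snd hb
        exact h1.trans h2.symm)
      subst hab
      have := (Fintype.mem_piFinset.1 hh) a
      rw [Finset.mem_offDiag] at this
      have h1 := congrArg Prod.fst ha
      have h2 := congrArg Prod.fst hb
      exact this.2.2 (h1.trans h2.symm)
  have hdisj : ∀ h ∈ H, Disjoint F₁ (F₂ h) := by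
    intro h hh
    rw [Finset.disjoint_map, Finset.disjoint_left]
    intro x hx hx'
    simp only [G₁, G₂, Finset.mem_union, Finset.mem_image, Finset.mem_univ, true_and] at hx'
    have hx2 := (Finset.mem_product.1 hx).2
    rw [Finset.mem_compl] at hx2
    rcases hx' with ⟨a, ha⟩ | ⟨a, ha⟩
    · exact hx2 (by rw [← ha]; exact a.2)
    · exact hx2 (by rw [← ha]; exact a.2)
  have hsub : {E : Fin n × Fin n → Bool | (∀ s ∈ S, ∀ t, t ∉ T → ¬ E (e (s, t)) = true) ∧
        ∀ t ∈ T, ∃ x ∈ S.offDiag, E (e (x.1, t)) = true ∧ E (e (x.2, t)) = true} ⊆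
      ⋃ h ∈ H, {E | (∀ x ∈ F₁, E x = false) ∧ ∀ x ∈ F₂ h, E x = true} := by
    rintro E ⟨hE1, hE2⟩
    choose h hh1 hh2 using hE2
    simp only [Set.mem_iUnion, Set.mem_ofPred_eq]
    refine ⟨fun t => h t t.2, Fintype.mem_piFinset.2 fun t => hh1 t t.2, ?_, ?_⟩
    · intro x hx
      obtain ⟨⟨s, t⟩, hy, rfl⟩ := Finset.mem_map.1 hx
      rw [Finset.mem_product, Finset.mem_compl] at hy
      simpa using hE1 s hy.1 t hy.2
    · intro x hx
      obtain ⟨y, hy, rfl⟩ := Finset.mem_map.1 hx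
      simp only [G₁, G₂, Finset.mem_union, Finset.mem_image, Finset.mem_univ, true_and] at hy
      rcases hy with ⟨a, rfl⟩ | ⟨a, rfl⟩
      · exact (hh2 a a.2).1
      · exact (hh2 a a.2).2
  refine (measureReal_mono hsub (measure_ne_top _ _)).trans ((measureReal_biUnion_finset_le _ _).trans ?_)
  rw [← hH, ← nsmul_eq_mul]
  refine Finset.sum_le_card_nsmul _ _ _ fun h hh => ?_
  rw [box_prob h0 h1 _ _ (hdisj h hh), hF₁, hF₂ h hh]

theorem bad_prob {n : ℕ} {p : ℝ} (h0 : 0 ≤ p) (h1 : p ≤ 1)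
    (e : Fin n × Fin n ≃ Fin n × Fin n) :
    (Measure.pi fun _ : Fin n × Fin n => bernM p).real
      {E | BadSet fun s t => E (e (s, t)) = true} ≤
    ∑ j ∈ (range n).filter (fun j => 2 * j + 1 ≤ n), (n.choose (j + 1) : ℝ) * ((n.choose j : ℝ) *
      ((((j + 1) * j : ℕ) : ℝ) ^ j * ((1 - p) ^ ((j + 1) * (n - j)) * p ^ (2 * j)))) := by
  have hbp := bernM_prob h0 h1
  have hsub : {E : Fin n × Fin n → Bool | BadSet fun s t => E (e (s, t)) = true} ⊆
      ⋃ j ∈ (range n).filter (fun j => 2 * j + 1 ≤ n), ⋃ S ∈ powersetCard (j + 1) univ,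
      ⋃ T ∈ powersetCard j univ, {E | (∀ s ∈ S, ∀ t, t ∉ T → ¬ E (e (s, t)) = true) ∧
        ∀ t ∈ T, ∃ x ∈ S.offDiag, E (e (x.1, t)) = true ∧ E (e (x.2, t)) = true} := by
    rintro E ⟨S, T, hc, hle, hE⟩
    simp only [Set.mem_iUnion]
    refine ⟨T.card, by simp; omega, S, by simp [hc], T, by simp, hE⟩
  refine (measureReal_mono hsub (measure_ne_top _ _)).trans ((measureReal_biUnion_finset_le _ _).trans ?_)
  refine Finset.sum_le_sum fun j hj => (measureReal_biUnion_finset_le _ _).trans ?_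
  have hcn : ∀ k, n.choose k = (powersetCard k (univ : Finset (Fin n))).card := by simp
  rw [hcn (j + 1), ← nsmul_eq_mul]
  refine Finset.sum_le_card_nsmul _ _ _ fun S hS => (measureReal_biUnion_finset_le _ _).trans ?_
  rw [hcn j, ← nsmul_eq_mul]
  refine Finset.sum_le_card_nsmul _ _ _ fun T hT => ?_
  refine (fixed_prob h0 h1 e S T).trans (le_of_eq ?_)
  rw [Finset.offDiag_card, (Finset.mem_powersetCard.1 hS).2, (Finset.mem_powersetCard.1 hT).2]
  congr 3
  have : (j + 1) * (j + 1) - (j + 1) = (j + 1) * j := by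
    rw [show (j + 1) * (j + 1) = (j + 1) * j + (j + 1) by ring]; omega
  exact_mod_cast this

theorem term_bound (n j : ℕ) (p : ℝ) (h0 : 0 ≤ p) (h1 : p ≤ 1) (hj : 2 * j + 1 ≤ n) :
    (n.choose (j + 1) : ℝ) * ((n.choose j : ℝ) *
      ((((j + 1) * j : ℕ) : ℝ) ^ j * ((1 - p) ^ ((j + 1) * (n - j)) * p ^ (2 * j)))) ≤
    Real.exp 1 * (n * Real.exp (-(p * n))) *
      (Real.exp 3 * ((p * n) ^ 2 * Real.exp (-(p * n / 2)))) ^ j := by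
  have c1 : (n.choose (j + 1) : ℝ) * ((j : ℝ) + 1) ^ j ≤ n ^ (j + 1) * Real.exp (j + 1) := by
    have a := Nat.choose_le_pow_div (α := ℝ) (j + 1) n
    have b := Real.pow_div_factorial_le_exp ((j : ℝ) + 1) (by positivity) (j + 1)
    calc (n.choose (j + 1) : ℝ) * ((j : ℝ) + 1) ^ j
        ≤ ((n : ℝ) ^ (j + 1) / (j + 1).factorial) * ((j : ℝ) + 1) ^ (j + 1) := by
          gcongr
          · linarith [Nat.cast_nonneg (α := ℝ) j]
          · omega
      _ = n ^ (j + 1) * (((j : ℝ) + 1) ^ (j + 1) / (j + 1).factorial) := by ring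
      _ ≤ _ := by gcongr
  have c2 : (n.choose j : ℝ) * (j : ℝ) ^ j ≤ n ^ j * Real.exp j := by
    have a := Nat.choose_le_pow_div (α := ℝ) j n
    have b := Real.pow_div_factorial_le_exp (j : ℝ) (by positivity) j
    calc (n.choose j : ℝ) * (j : ℝ) ^ j
        ≤ ((n : ℝ) ^ j / j.factorial) * (j : ℝ) ^ j := by gcongr
      _ = n ^ j * ((j : ℝ) ^ j / j.factorial) := by ring
      _ ≤ _ := by gcongr
  have c3 : (1 - p) ^ ((j + 1) * (n - j)) ≤
      Real.exp (-(p * n)) * (Real.exp 1 * Real.exp (-(p * n / 2))) ^ j := by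
    calc (1 - p) ^ ((j + 1) * (n - j)) ≤ (Real.exp (-p)) ^ ((j + 1) * (n - j)) :=
          pow_le_pow_left₀ (by linarith) (Real.one_sub_le_exp_neg p) _
      _ = Real.exp (-p * ((j + 1) * (n - j))) := by
          rw [← Real.exp_nat_mul]
          congr 1
          push_cast [show j ≤ n by omega]
          ring
      _ ≤ Real.exp (-(p * n) + j * (1 + -(p * n / 2))) := by
          apply Real.exp_le_exp.2
          have hj' : (2 * j + 1 : ℝ) ≤ n := by exact_mod_cast hj
          have hj0 : (0 : ℝ) ≤ j := by positivity
          have k1 : 0 ≤ p * j * (n - (2 * j + 1)) :=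
            mul_nonneg (mul_nonneg h0 hj0) (by linarith)
          have k2 : 0 ≤ j * (1 - p) := mul_nonneg hj0 (by linarith)
          nlinarith
      _ = _ := by rw [Real.exp_add, Real.exp_nat_mul, Real.exp_add]
  calc _ = ((n.choose (j + 1) : ℝ) * ((j : ℝ) + 1) ^ j) * ((n.choose j : ℝ) * (j : ℝ) ^ j) *
        ((1 - p) ^ ((j + 1) * (n - j)) * p ^ (2 * j)) := by
        push_cast; rw [mul_pow]; ring
    _ ≤ (n ^ (j + 1) * Real.exp (j + 1)) * (n ^ j * Real.exp j) *
        ((Real.exp (-(p * n)) * (Real.exp 1 * Real.exp (-(p * n / 2))) ^ j) * p ^ (2 * j)) := by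
        have : 0 ≤ 1 - p := by linarith
        gcongr
    _ = _ := by
        have e1 : Real.exp (j + 1) = Real.exp 1 ^ j * Real.exp 1 := by
          rw [Real.exp_add, ← Real.exp_nat_mul, mul_one]
        have e2 : Real.exp j = Real.exp 1 ^ j := by rw [← Real.exp_nat_mul, mul_one]
        have e3 : Real.exp 3 = Real.exp 1 ^ 3 := by rw [← Real.exp_nat_mul]; norm_num
        rw [e1, e2, e3]
        simp only [mul_pow, ← pow_mul, pow_succ]
        ring

theorem bad_prob' {n : ℕ} {p : ℝ} (h0 : 0 ≤ p) (h1 : p ≤ 1)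
    (e : Fin n × Fin n ≃ Fin n × Fin n)
    (hr : Real.exp 3 * ((p * n) ^ 2 * Real.exp (-(p * n / 2))) ≤ 1 / 2) :
    (Measure.pi fun _ : Fin n × Fin n => bernM p).real
      {E | BadSet fun s t => E (e (s, t)) = true} ≤
    2 * (Real.exp 1 * (n * Real.exp (-(p * n)))) := by
  refine (bad_prob h0 h1 e).trans ?_
  calc _ ≤ ∑ j ∈ (range n).filter (fun j => 2 * j + 1 ≤ n),
        Real.exp 1 * (n * Real.exp (-(p * n))) * (1 / 2) ^ j := by
        refine Finset.sum_le_sum fun j hj => ?_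
        refine (term_bound n j p h0 h1 (Finset.mem_filter.1 hj).2).trans ?_
        gcongr
    _ ≤ ∑ j ∈ range n, Real.exp 1 * (n * Real.exp (-(p * n))) * (1 / 2) ^ j :=
        Finset.sum_le_sum_of_subset_of_nonneg (Finset.filter_subset _ _)
          (fun j _ _ => by positivity)
    _ = Real.exp 1 * (n * Real.exp (-(p * n))) * ∑ j ∈ range n, (1 / 2) ^ j := by
        rw [Finset.mul_sum]
    _ ≤ Real.exp 1 * (n * Real.exp (-(p * n))) * 2 := by
        gcongr
        have := sum_geometric_two_le n
        simpa using this
    _ = _ := by ring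

theorem noPM_prob {n : ℕ} {p : ℝ} (h0 : 0 ≤ p) (h1 : p ≤ 1)
    (hr : Real.exp 3 * ((p * n) ^ 2 * Real.exp (-(p * n / 2))) ≤ 1 / 2) :
    (Measure.pi fun _ : Fin n × Fin n => bernM p)
      {E | ¬ ∃ σ : Equiv.Perm (Fin n), ∀ a, E (a, σ a) = true} ≤
    ENNReal.ofReal (4 * (Real.exp 1 * (n * Real.exp (-(p * n))))) := by
  have hbp := bernM_prob h0 h1
  have hsub : {E : Fin n × Fin n → Bool | ¬ ∃ σ : Equiv.Perm (Fin n), ∀ a, E (a, σ a) = true} ⊆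
      {E | BadSet fun s t => E (Equiv.refl _ (s, t)) = true} ∪
      {E | BadSet fun s t => E (Equiv.prodComm _ _ (s, t)) = true} := by
    intro E hE
    exact hall_bad (fun s t => E (s, t) = true) hE
  rw [ENNReal.le_ofReal_iff_toReal_le (measure_ne_top _ _) (by positivity)]
  change (Measure.pi fun _ : Fin n × Fin n => bernM p).real _ ≤ _
  refine (measureReal_mono hsub (measure_ne_top _ _)).trans ((measureReal_union_le _ _).trans ?_)
  have := bad_prob' h0 h1 (Equiv.refl (Fin n × Fin n)) hr
  have := bad_prob' h0 h1 (Equiv.prodComm (Fin n) (Fin n)) hr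
  linarith

theorem r_tendsto : Tendsto (fun x : ℝ => Real.exp 3 * (x ^ 2 * Real.exp (-(x / 2)))) atTop
    (nhds 0) := by
  have h := (Real.tendsto_pow_mul_exp_neg_atTop_nhds_zero 2).comp
    (tendsto_id.atTop_div_const (show (0 : ℝ) < 2 by norm_num))
  have h2 := h.const_mul (Real.exp 3 * 4)
  rw [mul_zero] at h2
  refine h2.congr fun x => ?_
  simp only [Function.comp, id]
  ring

/-- for every `ε > 0`, w.h.p. there is a perfect matching `M` with
`||M ∩ Qᵢ| − αᵢ n| ≤ εn` for every color `i`. -/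
theorem near_proportional_matching (q : ℕ) (hq : 1 ≤ q) (α : Fin q → ℝ)
    (hα : ∀ i, 0 < α i) (hsum : ∑ i, α i = 1)
    (ε : ℝ) (hε : 0 < ε)
    (w : ℕ → ℝ) (hw : Tendsto w atTop atTop)
    (hwo : w =o[atTop] fun n => Real.log n) :
    Tendsto (fun n =>
      graphM n q α ((Real.log n + w n) / n)
        {f | ∃ σ : Equiv.Perm (Fin n), (∀ a, f (a, σ a) ≠ none) ∧
          ∀ i, |((univ.filter fun a => f (a, σ a) = some i).card : ℝ) - α i * n| ≤ ε * n})
      atTop (nhds 1) := by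
  have hcast : Tendsto (fun n : ℕ => (n : ℝ)) atTop atTop := tendsto_natCast_atTop_atTop
  have hlog : Tendsto (fun n : ℕ => Real.log n) atTop atTop := Real.tendsto_log_atTop.comp hcast
  have hL : Tendsto (fun n : ℕ => Real.log n + w n) atTop atTop := hlog.atTop_add_atTop hw
  have hr := (r_tendsto.comp hL).eventually (eventually_le_nhds (show (0 : ℝ) < 1 / 2 by norm_num))
  have hw1 : ∀ᶠ n : ℕ in atTop, w n ≤ Real.log n := by
    filter_upwards [hwo.bound (show (0 : ℝ) < 1 by norm_num), hlog.eventually_ge_atTop 0]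
      with n hn hn0
    rw [one_mul, Real.norm_eq_abs, Real.norm_eq_abs, abs_of_nonneg hn0] at hn
    exact (le_abs_self _).trans hn
  have hlogn : ∀ᶠ n : ℕ in atTop, 2 * Real.log n ≤ n := by
    have := (Real.isLittleO_log_id_atTop.comp_tendsto hcast).bound
      (show (0 : ℝ) < 1 / 2 by norm_num)
    filter_upwards [this, hlog.eventually_ge_atTop 0] with n hn hn0
    simp only [Function.comp, id, Real.norm_eq_abs] at hn
    rw [abs_of_nonneg hn0, abs_of_nonneg (Nat.cast_nonneg n)] at hn
    linarith
  have hbound : ∀ᶠ n : ℕ in atTop,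
      1 - (ENNReal.ofReal (4 * (Real.exp 1 * Real.exp (-(w n)))) +
        q * ENNReal.ofReal (1 / (ε ^ 2 * n))) ≤
      graphM n q α ((Real.log n + w n) / n) {f | GoodF n q α ε f} ∧
      graphM n q α ((Real.log n + w n) / n) {f | GoodF n q α ε f} ≤ 1 := by
    filter_upwards [hr, hw1, hlogn, hL.eventually_ge_atTop 0, eventually_gt_atTop 0]
      with n hr hw1 hlogn hL0 hn
    have hn' : (0 : ℝ) < n := by exact_mod_cast hn
    have h0 : 0 ≤ (Real.log n + w n) / n := by positivity
    have h1 : (Real.log n + w n) / n ≤ 1 := by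
      rw [div_le_one hn']; linarith
    have hpn : (Real.log n + w n) / n * n = Real.log n + w n := by field_simp
    have hcp := colM_prob q α hα hsum
    have hbp := bernM_prob h0 h1
    have hprob : IsProbabilityMeasure (graphM n q α ((Real.log n + w n) / n)) := by
      rw [graphM_eq_s2 n q α hα hsum _ h0 h1]
      exact Measure.isProbabilityMeasure_map (measurable_of_finite _).aemeasurable
    have hPM := noPM_prob (n := n) h0 h1 (by rw [hpn]; exact hr)
    rw [hpn, neg_add, Real.exp_add, Real.exp_neg (Real.log n), Real.exp_log hn', ← mul_assoc (n : ℝ),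
      mul_inv_cancel₀ hn'.ne', one_mul] at hPM
    have hred := reduction n q α hα hsum _ h0 h1 ε hε hn
    have hcompl := prob_compl_eq_one_sub (μ := graphM n q α ((Real.log n + w n) / n))
      (s := {f | ¬ GoodF n q α ε f}) (Set.toFinite _).measurableSet
    have hset : {f : Fin n × Fin n → Option (Fin q) | ¬ GoodF n q α ε f}ᶜ =
        {f | GoodF n q α ε f} := by
      ext f; simp
    rw [hset] at hcompl
    refine ⟨?_, prob_le_one⟩
    rw [hcompl]
    exact tsub_le_tsub_left (hred.trans (add_le_add_left hPM _)) 1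
  have herr : Tendsto (fun n : ℕ => ENNReal.ofReal (4 * (Real.exp 1 * Real.exp (-(w n)))) +
        q * ENNReal.ofReal (1 / (ε ^ 2 * n))) atTop (nhds 0) := by
    have t1 : Tendsto (fun n : ℕ => 4 * (Real.exp 1 * Real.exp (-(w n)))) atTop (nhds 0) := by
      have := ((Real.tendsto_exp_neg_atTop_nhds_zero.comp hw).const_mul (Real.exp 1)).const_mul 4
      simpa using this
    have t2 : Tendsto (fun n : ℕ => 1 / (ε ^ 2 * (n : ℝ))) atTop (nhds 0) :=
      tendsto_const_nhds.div_atTop (hcast.const_mul_atTop (by positivity))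
    have t1' := ENNReal.tendsto_ofReal t1
    have t2' := ENNReal.Tendsto.const_mul (a := (q : ENNReal)) (ENNReal.tendsto_ofReal t2)
      (Or.inr (by simp))
    simpa using t1'.add t2'
  have hlow := ENNReal.Tendsto.sub (tendsto_const_nhds (x := (1 : ENNReal)) (f := (atTop : Filter ℕ)))
    herr (Or.inl (by simp))
  rw [tsub_zero] at hlow
  exact tendsto_of_tendsto_of_tendsto_of_le_of_le' hlow tendsto_const_nhds
    (hbound.mono fun n h => h.1) (hbound.mono fun n h => h.2)
end
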